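/- arXiv:1006.1051 — 9 statements merged into one kernel-verified Lean document; each statement's English description precedes it below -/
import Mathlib

section
/- Let X be a d-dimensional real normed space with 0 < δ < 2, and let S be a set of unit vectors in X such that ‖x + y‖ ≤ δ for all distinct x, y ∈ S (a δ-additive set). Then the cardinality of S is at most 2·(2/(2−δ))^d. -/
open MeasureTheory Set

lemma bm_one_sum (A B C : Set ℝ) (hA : MeasurableSet A) (hB : MeasurableSet B)
    (hAn : A.Nonempty) (hBn : B.Nonempty) (h : ∀ a ∈ A, ∀ b ∈ B, a + b ∈ C) :
    volume A + volume B ≤ volume C := by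
  have key : ∀ K L : Set ℝ, IsCompact K → IsCompact L → K.Nonempty → L.Nonempty →
      K ⊆ A → L ⊆ B → volume K + volume L ≤ volume C := by
    intro K L hK hL hKn hLn hKA hLB
    obtain ⟨k, hk, hkm⟩ := hK.exists_isGreatest hKn
    obtain ⟨l, hl, hlm⟩ := hL.exists_isLeast hLn
    have e1 : volume ((fun x => x + (-l)) ⁻¹' K) = volume K := measure_preimage_add_right _ _ _
    have e2 : volume ((fun x => (-k) + x) ⁻¹' L) = volume L := measure_preimage_add _ _ _
    rw [← e1, ← e2, ← measure_union₀]
    · apply measure_mono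
      rintro x (hx | hx)
      · have := h _ (hKA hx) _ (hLB hl)
        simpa using this
      · have := h _ (hKA hk) _ (hLB hx)
        simpa using this
    · exact ((measurable_const_add (-k)) hL.measurableSet).nullMeasurableSet
    · have : ((fun x => x + (-l)) ⁻¹' K) ∩ ((fun x => (-k) + x) ⁻¹' L) ⊆ {k + l} := by
        rintro x ⟨h1, h2⟩
        have a1 := hkm h1
        have a2 := hlm h2
        simp only [mem_singleton_iff]
        linarith
      exact measure_mono_null this (by simp)
  obtain ⟨a0, ha0⟩ := hAn
  obtain ⟨b0, hb0⟩ := hBn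
  have s1 : ∀ L, IsCompact L → L.Nonempty → L ⊆ B → volume A + volume L ≤ volume C := by
    intro L hL hLn hLB
    by_contra hc
    push Not at hc
    rcases lt_or_ge (volume C) (volume L) with h1 | h1
    · have := key {a0} L isCompact_singleton hL ⟨a0, rfl⟩ hLn (by simpa using ha0) hLB
      exact absurd (lt_of_le_of_lt (le_trans le_add_self this) h1) (lt_irrefl _)
    · have h2 : volume C - volume L < volume A := by
        apply ENNReal.sub_lt_of_lt_add h1 hc
      obtain ⟨K, hKA, hK, hlt⟩ := hA.exists_lt_isCompact h2
      have hKn : K.Nonempty := by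
        by_contra hne
        rw [not_nonempty_iff_eq_empty] at hne
        simp [hne] at hlt
      have := key K L hK hL hKn hLn hKA hLB
      have h3 : volume K ≤ volume C - volume L :=
        ENNReal.le_sub_of_add_le_right hL.measure_lt_top.ne this
      exact absurd (lt_of_lt_of_le hlt h3) (lt_irrefl _)
  by_contra hc
  push Not at hc
  have hAC : volume A ≤ volume C := by
    have := s1 {b0} isCompact_singleton ⟨b0, rfl⟩ (by simpa using hb0)
    simpa using this
  have h2 : volume C - volume A < volume B := by
    apply ENNReal.sub_lt_of_lt_add hAC
    rwa [add_comm] at hc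
  obtain ⟨L, hLB, hL, hlt⟩ := hB.exists_lt_isCompact h2
  have hLn : L.Nonempty := by
    by_contra hne
    rw [not_nonempty_iff_eq_empty] at hne
    simp [hne] at hlt
  have h4 := s1 L hL hLn hLB
  have hAt : volume A ≠ ⊤ := by
    intro ht
    rw [ht] at hAC hc
    rw [top_le_iff] at hAC
    rw [hAC] at hc
    simp at hc
  have h3 : volume L ≤ volume C - volume A :=
    ENNReal.le_sub_of_add_le_left hAt h4
  exact absurd (lt_of_lt_of_le hlt h3) (lt_irrefl _)

lemma bm_one (A B C : Set ℝ) (hA : MeasurableSet A) (hB : MeasurableSet B)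
    (hAn : A.Nonempty) (hBn : B.Nonempty) (h : ∀ a ∈ A, ∀ b ∈ B, (a + b) / 2 ∈ C) :
    volume A + volume B ≤ 2 * volume C := by
  have := bm_one_sum A B ((fun x => x * 2⁻¹) ⁻¹' C) hA hB hAn hBn
    (fun a ha b hb => by simpa [div_eq_mul_inv] using h a ha b hb)
  rw [Real.volume_preimage_mul_right (by norm_num)] at this
  simpa using this

lemma pl_norm (F G H : ℝ → ℝ) (hF : Measurable F) (hG : Measurable G) (hH : Measurable H)
    (F0 : ∀ x, 0 ≤ F x) (G0 : ∀ x, 0 ≤ G x) (H0 : ∀ x, 0 ≤ H x)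
    (F1 : ∀ x, F x ≤ 1) (G1 : ∀ x, G x ≤ 1)
    (Fs : ∀ s < 1, ∃ x, s < F x) (Gs : ∀ s < 1, ∃ x, s < G x)
    (h : ∀ x y, F x * G y ≤ H ((x + y) / 2) ^ 2) :
    (∫⁻ x, ENNReal.ofReal (F x)) + (∫⁻ x, ENNReal.ofReal (G x)) ≤
      2 * ∫⁻ x, ENNReal.ofReal (H x) := by
  rw [lintegral_eq_lintegral_meas_lt _ (.of_forall F0) hF.aemeasurable,
    lintegral_eq_lintegral_meas_lt _ (.of_forall G0) hG.aemeasurable,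
    lintegral_eq_lintegral_meas_lt _ (.of_forall H0) hH.aemeasurable]
  have mono : Measurable fun t => volume {a | t < F a} := by
    apply Antitone.measurable
    intro s t hst
    exact measure_mono fun a ha => lt_of_le_of_lt hst ha
  rw [← lintegral_add_left mono, ← lintegral_const_mul' _ _ (by simp)]
  apply setLIntegral_mono' measurableSet_Ioi
  intro s hs
  rw [mem_Ioi] at hs
  rcases lt_or_ge s 1 with h1 | h1
  · apply bm_one _ _ _ (measurableSet_lt measurable_const hF) (measurableSet_lt measurable_const hG)
      (Fs s h1) (Gs s h1)
    intro a ha b hb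
    simp only [mem_ofPred_eq] at ha hb ⊢
    have := h a b
    have h3 : s * s < F a * G b := by nlinarith
    by_contra hc
    push Not at hc
    nlinarith [H0 ((a + b) / 2)]
  · have e1 : {a | s < F a} = ∅ := by
      ext a; simp; linarith [F1 a]
    have e2 : {a | s < G a} = ∅ := by
      ext a; simp; linarith [G1 a]
    simp [e1, e2]

lemma enn_amgm (a b c : ENNReal) (h : a + b ≤ 2 * c) : a * b ≤ c ^ 2 := by
  rcases eq_or_ne c ⊤ with rfl | hc
  · simp
  have hab : a + b ≠ ⊤ := ne_top_of_le_ne_top (ENNReal.mul_ne_top (by simp) hc) h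
  have ha : a ≠ ⊤ := fun h => hab (by simp [h])
  have hb : b ≠ ⊤ := fun h => hab (by simp [h])
  lift a to NNReal using ha
  lift b to NNReal using hb
  lift c to NNReal using hc
  norm_cast at h ⊢
  rw [← NNReal.coe_le_coe] at h ⊢
  push_cast at h ⊢
  nlinarith [a.2, b.2, c.2, sq_nonneg ((a:ℝ) - b), a.coe_nonneg, b.coe_nonneg]

lemma pl_one (F G H : ℝ → ℝ) (hF : Measurable F) (hG : Measurable G) (hH : Measurable H)
    (F0 : ∀ x, 0 ≤ F x) (G0 : ∀ x, 0 ≤ G x) (H0 : ∀ x, 0 ≤ H x)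
    (F1 : BddAbove (range F)) (G1 : BddAbove (range G))
    (h : ∀ x y, F x * G y ≤ H ((x + y) / 2) ^ 2) :
    (∫⁻ x, ENNReal.ofReal (F x)) * (∫⁻ x, ENNReal.ofReal (G x)) ≤
      (∫⁻ x, ENNReal.ofReal (H x)) ^ 2 := by
  by_cases hFz : ∀ x, F x = 0
  · simp [hFz]
  by_cases hGz : ∀ x, G x = 0
  · simp [hGz]
  push Not at hFz hGz
  obtain ⟨x0, hx0⟩ := hFz
  obtain ⟨y0, hy0⟩ := hGz
  have hM : ∀ F : ℝ → ℝ, (∀ x, 0 ≤ F x) → BddAbove (range F) → ∀ x0, F x0 ≠ 0 → ∃ M, 0 < M ∧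
      (∀ x, F x ≤ M) ∧ ∀ s < M, ∃ x, s < F x := by
    intro F F0 F1 x0 hx0
    refine ⟨sSup (range F), ?_, fun x => le_csSup F1 ⟨x, rfl⟩, fun s hs => ?_⟩
    · exact lt_of_lt_of_le (lt_of_le_of_ne (F0 x0) hx0.symm) (le_csSup F1 ⟨x0, rfl⟩)
    · obtain ⟨_, ⟨x, rfl⟩, hx⟩ := exists_lt_of_lt_csSup (range_nonempty F) hs
      exact ⟨x, hx⟩
  obtain ⟨M, M0, hM1, hM2⟩ := hM F F0 F1 x0 hx0
  obtain ⟨P, P0, hP1, hP2⟩ := hM G G0 G1 y0 hy0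
  have hMP : 0 < Real.sqrt (M * P) := Real.sqrt_pos.mpr (by positivity)
  have hsq : Real.sqrt (M * P) ^ 2 = M * P := Real.sq_sqrt (by positivity)
  set Q := Real.sqrt (M * P)
  have := pl_norm (fun x => M⁻¹ * F x) (fun x => P⁻¹ * G x) (fun x => Q⁻¹ * H x)
    (hF.const_mul _) (hG.const_mul _) (hH.const_mul _)
    (fun x => mul_nonneg (by positivity) (F0 x)) (fun x => mul_nonneg (by positivity) (G0 x))
    (fun x => mul_nonneg (by positivity) (H0 x))
    (fun x => by rw [inv_mul_le_iff₀ M0]; simpa using hM1 x)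
    (fun x => by rw [inv_mul_le_iff₀ P0]; simpa using hP1 x)
    (fun s hs => by
      obtain ⟨x, hx⟩ := hM2 (M * s) (by nlinarith)
      exact ⟨x, by rw [lt_inv_mul_iff₀ M0]; exact hx⟩)
    (fun s hs => by
      obtain ⟨x, hx⟩ := hP2 (P * s) (by nlinarith)
      exact ⟨x, by rw [lt_inv_mul_iff₀ P0]; exact hx⟩)
    (fun x y => by
      rw [mul_pow, inv_pow, hsq, mul_inv]
      have := h x y
      have h5 : 0 < M⁻¹ * P⁻¹ := by positivity
      nlinarith)
  have h6 := enn_amgm _ _ _ this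
  have e : ∀ (c : ℝ) (F : ℝ → ℝ), 0 < c → ∫⁻ x, ENNReal.ofReal (c⁻¹ * F x) =
      ENNReal.ofReal c⁻¹ * ∫⁻ x, ENNReal.ofReal (F x) := by
    intro c F hc
    rw [← lintegral_const_mul' _ _ (by simp)]
    congr 1; ext x
    rw [ENNReal.ofReal_mul (by positivity)]
  rw [e M F M0, e P G P0, e Q H hMP, mul_pow, ← ENNReal.ofReal_pow (by positivity), inv_pow, hsq,
    mul_mul_mul_comm, ← ENNReal.ofReal_mul (by positivity), ← mul_inv] at h6
  rwa [ENNReal.mul_le_mul_iff_right] at h6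
  · simp; positivity
  · simp

lemma bm_pi (n : ℕ) : ∀ (A B C : Set (Fin n → ℝ)), IsOpen A → IsOpen B → IsOpen C →
    Bornology.IsBounded A → Bornology.IsBounded B → Bornology.IsBounded C →
    (∀ a ∈ A, ∀ b ∈ B, (1/2 : ℝ) • (a + b) ∈ C) → volume A * volume B ≤ volume C ^ 2 := by
  induction n with
  | zero =>
    intro A B C _ _ _ _ _ _ h
    rcases A.eq_empty_or_nonempty with rfl | ⟨a, ha⟩
    · simp
    rcases B.eq_empty_or_nonempty with rfl | ⟨b, hb⟩
    · simp
    have hC : C = univ := by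
      ext x; simp only [mem_univ, iff_true]; rw [Subsingleton.elim x]; exact h a ha b hb
    calc volume A * volume B ≤ volume (univ : Set (Fin 0 → ℝ)) * volume (univ : Set (Fin 0 → ℝ)) := by
          gcongr <;> exact subset_univ _
      _ = volume C ^ 2 := by rw [hC, sq]
  | succ n ih =>
    intro A B C hA hB hC bA bB bC h
    have cont : ∀ t : ℝ, Continuous fun v : Fin n → ℝ => (Fin.cons t v : Fin (n+1) → ℝ) := by
      intro t
      fun_prop
    have sl : ∀ A : Set (Fin (n+1) → ℝ), IsOpen A → Bornology.IsBounded A →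
        ∃ F : ℝ → ℝ, Measurable F ∧ (∀ t, 0 ≤ F t) ∧ BddAbove (range F) ∧
          (∀ t, ENNReal.ofReal (F t) = volume {v : Fin n → ℝ | (Fin.cons t v : Fin (n+1) → ℝ) ∈ A}) ∧
          (∀ t, Bornology.IsBounded {v : Fin n → ℝ | (Fin.cons t v : Fin (n+1) → ℝ) ∈ A}) ∧
          volume A = ∫⁻ t, ENNReal.ofReal (F t) := by
      intro A hA bA
      obtain ⟨R, hR⟩ := bA.subset_closedBall 0
      have sub : ∀ t, {v : Fin n → ℝ | (Fin.cons t v : Fin (n+1) → ℝ) ∈ A} ⊆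
          Metric.closedBall 0 R := by
        intro t v hv
        have h1 := hR hv
        rw [mem_closedBall_zero_iff] at h1 ⊢
        have hR0 : 0 ≤ R := le_trans (norm_nonneg _) h1
        rw [pi_norm_le_iff_of_nonneg hR0] at h1 ⊢
        intro i
        simpa using h1 i.succ
      have mp := (volume_preserving_piFinSuccAbove (fun _ : Fin (n+1) => ℝ) 0).symm
      have hpre : ∀ t : ℝ, Prod.mk t ⁻¹' ((MeasurableEquiv.piFinSuccAbove (fun _ : Fin (n+1) => ℝ) 0).symm ⁻¹' A)
          = {v : Fin n → ℝ | (Fin.cons t v : Fin (n+1) → ℝ) ∈ A} := by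
        intro t
        ext v
        simp [MeasurableEquiv.piFinSuccAbove]
        rfl
      have e : volume A = ∫⁻ t, volume {v : Fin n → ℝ | (Fin.cons t v : Fin (n+1) → ℝ) ∈ A} := by
        rw [← mp.measure_preimage hA.measurableSet.nullMeasurableSet]
        rw [Measure.volume_eq_prod, Measure.prod_apply (mp.measurable hA.measurableSet)]
        simp_rw [hpre]
      have fin : ∀ t, volume {v : Fin n → ℝ | (Fin.cons t v : Fin (n+1) → ℝ) ∈ A} ≠ ⊤ := fun t =>
        ne_top_of_le_ne_top (measure_closedBall_lt_top (x := (0 : Fin n → ℝ)) (r := R)).ne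
          (measure_mono (sub t))
      have fe : ∀ t, ENNReal.ofReal (volume {v : Fin n → ℝ | (Fin.cons t v : Fin (n+1) → ℝ) ∈ A}).toReal
         = volume {v : Fin n → ℝ | (Fin.cons t v : Fin (n+1) → ℝ) ∈ A} := fun t =>
        ENNReal.ofReal_toReal (fin t)
      refine ⟨fun t => (volume {v : Fin n → ℝ | (Fin.cons t v : Fin (n+1) → ℝ) ∈ A}).toReal, ?_,
        fun t => ENNReal.toReal_nonneg, ?_, fe, fun t => Metric.isBounded_closedBall.subset (sub t), ?_⟩
      · have := measurable_measure_prodMk_left (ν := (volume : Measure (Fin n → ℝ)))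
          (mp.measurable hA.measurableSet)
        simp_rw [hpre] at this
        exact this.ennreal_toReal
      · refine ⟨(volume (Metric.closedBall (0 : Fin n → ℝ) R)).toReal, ?_⟩
        rintro _ ⟨t, rfl⟩
        exact ENNReal.toReal_mono (measure_closedBall_lt_top).ne (measure_mono (sub t))
      · rw [e]; simp_rw [fe]
    obtain ⟨F, F1, F2, F3, F4, F5, F6⟩ := sl A hA bA
    obtain ⟨G, G1, G2, G3, G4, G5, G6⟩ := sl B hB bB
    obtain ⟨H, H1, H2, H3, H4, H5, H6⟩ := sl C hC bC
    rw [F6, G6, H6]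
    apply pl_one F G H F1 G1 H1 F2 G2 H2 F3 G3
    intro x y
    have := ih _ _ _ (hA.preimage (cont x)) (hB.preimage (cont y)) (hC.preimage (cont ((x+y)/2)))
      (F5 x) (G5 y) (H5 ((x+y)/2)) (by
        intro a ha b hb
        have := h _ ha _ hb
        show Fin.cons _ _ ∈ C
        convert this using 1
        ext i
        refine Fin.cases ?_ (fun j => ?_) i
        · simp; ring
        · simp; ring)
    have e1 := F4 x
    have e2 := G4 y
    have e3 := H4 ((x+y)/2)
    change _ = volume ((fun v : Fin n → ℝ => (Fin.cons x v : Fin (n+1) → ℝ)) ⁻¹' A) at e1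
    change _ = volume ((fun v : Fin n → ℝ => (Fin.cons y v : Fin (n+1) → ℝ)) ⁻¹' B) at e2
    change _ = volume ((fun v : Fin n → ℝ => (Fin.cons ((x+y)/2) v : Fin (n+1) → ℝ)) ⁻¹' C) at e3
    rw [← e1, ← e2, ← e3, ← ENNReal.ofReal_mul (F2 x), ← ENNReal.ofReal_pow (H2 _)] at this
    exact (ENNReal.ofReal_le_ofReal_iff (sq_nonneg _)).mp this

lemma bm_space (X : Type*) [NormedAddCommGroup X] [NormedSpace ℝ X]
    [FiniteDimensional ℝ X] [MeasurableSpace X] [BorelSpace X] :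
    ∃ μ : Measure X, μ.IsAddHaarMeasure ∧ ∀ A B C : Set X, IsOpen A → IsOpen B → IsOpen C →
    Bornology.IsBounded A → Bornology.IsBounded B → Bornology.IsBounded C →
    (∀ a ∈ A, ∀ b ∈ B, (1/2 : ℝ) • (a + b) ∈ C) → ∀ q : ℝ, q ≤ μ.real A → q ≤ μ.real B →
      q ≤ μ.real C := by
  let e : X ≃L[ℝ] (Fin (Module.finrank ℝ X) → ℝ) :=
    ContinuousLinearEquiv.ofFinrankEq (by simp)
  refine ⟨Measure.map e.symm volume, inferInstance, ?_⟩
  intro A B C hA hB hC bA bB bC h q hq1 hq2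
  have hm : ∀ A : Set X, IsOpen A → (Measure.map e.symm volume).real A = (volume (e.symm ⁻¹' A)).toReal := by
    intro A hA
    rw [measureReal_def, Measure.map_apply e.symm.continuous.measurable hA.measurableSet]
  have hb : ∀ A : Set X, Bornology.IsBounded A → Bornology.IsBounded (e.symm ⁻¹' A) := by
    intro A hA
    have : e.symm ⁻¹' A = e '' A := by
      rw [ContinuousLinearEquiv.image_eq_preimage_symm]
    rw [this]
    exact e.lipschitz.isBounded_image hA
  have key := bm_pi _ _ _ _ (hA.preimage e.symm.continuous) (hB.preimage e.symm.continuous)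
    (hC.preimage e.symm.continuous) (hb A bA) (hb B bB) (hb C bC) (by
      intro a ha b hb
      have := h _ ha _ hb
      simpa using this)
  rw [hm A hA] at hq1
  rw [hm B hB] at hq2
  rw [hm C hC]
  have k2 := ENNReal.toReal_mono (by
    exact ENNReal.pow_ne_top (hb C bC).measure_lt_top.ne) key
  rw [ENNReal.toReal_mul, ENNReal.toReal_pow] at k2
  by_contra hc
  push Not at hc
  have h0 : 0 ≤ (volume (e.symm ⁻¹' C)).toReal := ENNReal.toReal_nonneg
  nlinarith

lemma lower_part {X : Type*} [DecidableEq X] (f : X → ℝ) (s : Finset X) : ∀ j ≤ s.card,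
    ∃ t ⊆ s, t.card = j ∧ ∀ a ∈ t, ∀ b ∈ s \ t, f a ≤ f b := by
  intro j
  induction j with
  | zero => intro _; exact ⟨∅, by simp, by simp, by simp⟩
  | succ j ih =>
    intro hj
    obtain ⟨t, ht, hc, hl⟩ := ih (by omega)
    have hne : (s \ t).Nonempty := by
      rw [← Finset.card_pos, Finset.card_sdiff_of_subset ht]; omega
    obtain ⟨p, hp, hmin⟩ := Finset.exists_min_image (s \ t) f hne
    have hp' := Finset.mem_sdiff.mp hp
    refine ⟨insert p t, ?_, ?_, ?_⟩
    · intro x hx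
      rcases Finset.mem_insert.mp hx with rfl | hx
      · exact hp'.1
      · exact ht hx
    · rw [Finset.card_insert_of_notMem hp'.2, hc]
    · intro a ha b hb
      have hb' : b ∈ s \ t := by
        simp only [Finset.mem_sdiff, Finset.mem_insert, not_or] at hb ⊢
        exact ⟨hb.1, hb.2.2⟩
      rcases Finset.mem_insert.mp ha with rfl | ha
      · exact hmin b hb'
      · exact hl a ha b hb'

section
variable {X : Type*} [NormedAddCommGroup X] [NormedSpace ℝ X]
    [FiniteDimensional ℝ X] [MeasurableSpace X] [BorelSpace X]

lemma hyper_null (μ : Measure X) [μ.IsAddHaarMeasure] (f : StrongDual ℝ X) (hf : f ≠ 0) (c : ℝ) :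
    μ {u | f u = c} = 0 := by
  obtain ⟨z, hz⟩ : ∃ z, f z ≠ 0 := by
    by_contra h
    push Not at h
    exact hf (by ext z; simp [h z])
  have h0 := Measure.addHaar_submodule μ (LinearMap.ker f.toLinearMap) (by
    intro h
    apply hz
    have : z ∈ LinearMap.ker f.toLinearMap := by rw [h]; trivial
    simpa using this)
  have : {u | f u = c} = (fun u => (-((c / f z) • z)) + u) ⁻¹' (LinearMap.ker f.toLinearMap : Set X) := by
    ext u
    simp only [mem_ofPred_eq, mem_preimage, SetLike.mem_coe, LinearMap.mem_ker]
    simp [hz]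
    constructor <;> intro h <;> linarith
  rw [this, measure_preimage_add, h0]

lemma split_meas (μ : Measure X) [μ.IsAddHaarMeasure] (f : StrongDual ℝ X) (hf : f ≠ 0) (c : ℝ)
    (A : Set X) (hA : Bornology.IsBounded A) :
    μ.real A = μ.real (A ∩ {u | f u < c}) + μ.real (A ∩ {u | c < f u}) := by
  have hfin : μ A ≠ ⊤ := hA.measure_lt_top.ne
  have h1 : MeasurableSet {u | f u < c} := (isOpen_lt f.continuous continuous_const).measurableSet
  have h2 := measureReal_inter_add_sdiff (μ := μ) (s := A) h1 hfin
  rw [← h2]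
  congr 1
  rw [measureReal_def, measureReal_def]
  congr 1
  apply measure_congr
  have h3 : ∀ᵐ u ∂μ, f u ≠ c := by
    rw [ae_iff]; simpa using hyper_null μ f hf c
  filter_upwards [h3] with u hu
  apply propext
  change (u ∈ A ∧ ¬ (f u < c)) ↔ (u ∈ A ∧ c < f u)
  constructor
  · rintro ⟨a, b⟩; exact ⟨a, lt_of_le_of_ne (not_lt.mp b) hu.symm⟩
  · rintro ⟨a, b⟩; exact ⟨a, not_lt.mpr b.le⟩

lemma half_ball (μ : Measure X) [μ.IsAddHaarMeasure] (f : StrongDual ℝ X) (hf : f ≠ 0)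
    (x : X) (r : ℝ) :
    μ.real (Metric.ball x r ∩ {u | f u < f x}) = μ.real (Metric.ball (0:X) r) / 2 ∧
    μ.real (Metric.ball x r ∩ {u | f x < f u}) = μ.real (Metric.ball (0:X) r) / 2 := by
  have h1 := split_meas μ f hf (f x) (Metric.ball x r) Metric.isBounded_ball
  have h2 : μ.real (Metric.ball x r) = μ.real (Metric.ball (0:X) r) := by
    rw [measureReal_def, measureReal_def, Measure.addHaar_ball_center]
  have h3 : μ.real (Metric.ball x r ∩ {u | f u < f x}) =
      μ.real (Metric.ball x r ∩ {u | f x < f u}) := by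
    have mp := Measure.measurePreserving_sub_left μ ((2:ℝ) • x)
    have hm : MeasurableSet (Metric.ball x r ∩ {u | f x < f u}) :=
      (Metric.isOpen_ball.inter (isOpen_lt continuous_const f.continuous)).measurableSet
    rw [measureReal_def, measureReal_def, ← mp.measure_preimage hm.nullMeasurableSet]
    congr 2
    ext u
    simp only [mem_inter_iff, Metric.mem_ball, mem_ofPred_eq, mem_preimage, dist_eq_norm, map_sub,
      map_smul, smul_eq_mul]
    have : (2:ℝ) • x - u - x = -(u - x) := by rw [two_smul]; abel
    rw [this, norm_neg]
    constructor
    · rintro ⟨a, b⟩; exact ⟨a, by linarith⟩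
    · rintro ⟨a, b⟩; exact ⟨a, by linarith⟩
  constructor <;> linarith

lemma cont_cut (μ : Measure X) [μ.IsAddHaarMeasure] (f : StrongDual ℝ X) (hf : f ≠ 0)
    (A : Set X) (hA : Bornology.IsBounded A) :
    Continuous fun t : ℝ => μ.real (A ∩ {u | f u < t}) := by
  have hm : ∀ t, MeasurableSet {u | f u < t} := fun t =>
    (isOpen_lt f.continuous continuous_const).measurableSet
  have e : (fun t : ℝ => μ.real (A ∩ {u | f u < t})) =
      fun t => ∫ u, ({u | f u < t} : Set X).indicator (fun _ => (1:ℝ)) u ∂(μ.restrict A) := by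
    ext t
    rw [integral_indicator (hm t)]
    simp [measureReal_restrict_apply, hm t, inter_comm]
  rw [e, continuous_iff_continuousAt]
  intro t0
  haveI : IsFiniteMeasure (μ.restrict A) := ⟨by simpa using hA.measure_lt_top⟩
  apply continuousAt_of_dominated (bound := fun _ => 1)
  · exact .of_forall fun t => (measurable_const.indicator (hm t)).aestronglyMeasurable
  · refine .of_forall fun t => .of_forall fun u => ?_
    by_cases h : u ∈ {u | f u < t} <;> simp [h]
  · exact integrable_const _
  · have h3 : ∀ᵐ u ∂(μ.restrict A), f u ≠ t0 := by
      apply ae_restrict_of_ae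
      rw [ae_iff]; simpa using hyper_null μ f hf t0
    filter_upwards [h3] with u hu
    rcases lt_or_gt_of_ne hu with h | h
    · apply ContinuousAt.congr (f := fun _ => (1:ℝ)) continuousAt_const
      filter_upwards [lt_mem_nhds h] with t ht
      simp [indicator, ht]
    · apply ContinuousAt.congr (f := fun _ => (0:ℝ)) continuousAt_const
      filter_upwards [gt_mem_nhds h] with t ht
      simp [indicator, ht.le]

lemma finset_bound (d : ℕ) (hdim : Module.finrank ℝ X = d)
    (δ : ℝ) (hδ0 : 0 < δ) (hδ2 : δ < 2)
    (s : Finset X) (hunit : ∀ x ∈ s, ‖x‖ = 1)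
    (hsum : ∀ x ∈ s, ∀ y ∈ s, x ≠ y → ‖x + y‖ ≤ δ) :
    (s.card : ℝ) * ((2 - δ) / 2) ^ d ≤ 2 := by
  classical
  obtain ⟨μ, hμ, bm⟩ := bm_space X
  set r : ℝ := (2 - δ) / 2 with hr
  have r0 : 0 < r := by rw [hr]; linarith
  have r1 : r ≤ 1 := by rw [hr]; linarith
  set w := μ.real (Metric.ball (0:X) 1) with hw
  set v := μ.real (Metric.ball (0:X) r) with hv
  have w0 : 0 < w := by
    rw [hw, measureReal_def]
    exact ENNReal.toReal_pos (Metric.measure_ball_pos μ _ one_pos).ne' measure_ball_lt_top.ne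
  have hvw : v = r ^ d * w := by
    rw [hv, hw, measureReal_def, measureReal_def, Measure.addHaar_ball_of_pos μ _ r0, hdim,
      ENNReal.toReal_mul, ENNReal.toReal_ofReal (by positivity)]
  have v0 : 0 ≤ v := measureReal_nonneg
  have hball : ∀ x, μ.real (Metric.ball x r) = v := by
    intro x
    rw [hv, measureReal_def, measureReal_def, Measure.addHaar_ball_center]
  have hsep : ∀ x ∈ s, ∀ y ∈ s, x ≠ y → 2 * r ≤ ‖x - y‖ := by
    intro x hx y hy hxy
    have h1 := hsum x hx y hy hxy
    have h2 : (2:ℝ) • x = (x + y) + (x - y) := by rw [two_smul]; abel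
    have h3 := norm_add_le (x + y) (x - y)
    rw [← h2, norm_smul, hunit x hx] at h3
    norm_num at h3
    linarith
  have hdisj : ∀ x ∈ s, ∀ y ∈ s, x ≠ y → Disjoint (Metric.ball x r) (Metric.ball y r) := by
    intro x hx y hy hxy
    apply Metric.ball_disjoint_ball
    rw [dist_eq_norm]
    linarith [hsep x hx y hy hxy]
  have hmid : ∀ x ∈ s, ∀ y ∈ s, x ≠ y → ∀ a ∈ Metric.ball x r, ∀ b ∈ Metric.ball y r,
      (1/2:ℝ) • (a + b) ∈ Metric.ball (0:X) 1 := by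
    intro x hx y hy hxy a ha b hb
    rw [Metric.mem_ball, dist_eq_norm] at ha hb
    rw [mem_ball_zero_iff, norm_smul]
    have h1 := hsum x hx y hy hxy
    have h2 : a + b = (x + y) + ((a - x) + (b - y)) := by abel
    have h3 := norm_add_le (x + y) ((a - x) + (b - y))
    have h4 := norm_add_le (a - x) (b - y)
    rw [← h2] at h3
    have h5 : ‖(1/2:ℝ)‖ = 1/2 := by norm_num
    rw [h5]
    linarith
  have hU : ∀ t ⊆ s, ∀ W : Set X, IsOpen W →
      μ.real ((⋃ x ∈ t, Metric.ball x r) ∩ W) = ∑ x ∈ t, μ.real (Metric.ball x r ∩ W) := by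
    intro t ht W hW
    rw [iUnion₂_inter]
    apply measureReal_biUnion_finset
    · intro x hx y hy hxy
      exact (hdisj x (ht hx) y (ht hy) hxy).mono inter_subset_left inter_subset_left
    · intro x _
      exact (Metric.isOpen_ball.inter hW).measurableSet
    · intro x _
      exact ne_top_of_le_ne_top (measure_ball_lt_top (x := x) (r := r)).ne (measure_mono inter_subset_left)
  have hUo : ∀ t : Finset X, IsOpen (⋃ x ∈ t, Metric.ball x r) := fun t =>
    isOpen_biUnion fun x _ => Metric.isOpen_ball
  have hUb : ∀ t : Finset X, Bornology.IsBounded (⋃ x ∈ t, Metric.ball x r) := fun t =>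
    (Bornology.isBounded_biUnion_finset t).mpr fun x _ => Metric.isBounded_ball
  have hUv : ∀ t ⊆ s, μ.real (⋃ x ∈ t, Metric.ball x r) = t.card * v := by
    intro t ht
    have := hU t ht univ isOpen_univ
    simpa [hball] using this
  suffices hs : (s.card : ℝ) * v ≤ 2 * w by
    rw [hvw, ← mul_assoc] at hs
    exact le_of_mul_le_mul_right hs w0
  rcases Nat.even_or_odd' s.card with ⟨k, hk | hk⟩
  · -- even case
    obtain ⟨t, ht, htc⟩ := Finset.exists_subset_card_eq (s := s) (n := k) (by omega)
    have hc2 : (s \ t).card = k := by rw [Finset.card_sdiff_of_subset ht]; omega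
    have := bm (⋃ x ∈ t, Metric.ball x r) (⋃ x ∈ s \ t, Metric.ball x r) (Metric.ball 0 1)
      (hUo _) (hUo _) Metric.isOpen_ball (hUb _) (hUb _) Metric.isBounded_ball (by
        intro a ha b hb
        simp only [mem_iUnion, exists_prop] at ha hb
        obtain ⟨x, hx, hax⟩ := ha
        obtain ⟨y, hy, hby⟩ := hb
        rw [Finset.mem_sdiff] at hy
        exact hmid x (ht hx) y hy.1 (by rintro rfl; exact hy.2 hx) a hax b hby)
      (k * v) (by rw [hUv t ht, htc]) (by rw [hUv _ Finset.sdiff_subset, hc2])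
    rw [hk]; push_cast; linarith
  · rcases Nat.eq_zero_or_pos k with rfl | hkpos
    · rw [hk]
      have : r ^ d ≤ 1 := pow_le_one₀ r0.le r1
      have : v ≤ w := by rw [hvw]; nlinarith
      push_cast; linarith
    obtain ⟨x, hx, y, hy, hxy⟩ := Finset.one_lt_card.mp (show 1 < s.card by omega)
    obtain ⟨f, hf1, hfxy⟩ := exists_dual_vector ℝ (x - y) (by
      rw [norm_ne_zero_iff, sub_ne_zero]; exact hxy)
    have hf0 : f ≠ 0 := by rintro rfl; simp at hf1
    have hfd : ∀ a b : X, |f a - f b| ≤ ‖a - b‖ := by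
      intro a b
      have := f.le_opNorm (a - b)
      rw [hf1, one_mul, map_sub] at this
      exact this
    have hspread : 2 * r ≤ f x - f y := by
      rw [← map_sub, hfxy]
      exact hsep x hx y hy hxy
    obtain ⟨S1, hS1, hS1c, hS1l⟩ := lower_part f s k (by omega)
    have hne : (s \ S1).Nonempty := by
      rw [← Finset.card_pos, Finset.card_sdiff_of_subset hS1]; omega
    obtain ⟨p, hp, hpmin⟩ := Finset.exists_min_image (s \ S1) f hne
    have hps : p ∈ s := (Finset.mem_sdiff.mp hp).1
    have hpS1 : p ∉ S1 := (Finset.mem_sdiff.mp hp).2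
    set T := (s \ S1).erase p with hT
    have hTs : T ⊆ s := (Finset.erase_subset _ _).trans Finset.sdiff_subset
    have hTc : T.card = k := by
      rw [hT, Finset.card_erase_of_mem hp, Finset.card_sdiff_of_subset hS1]; omega
    have hpT : p ∉ T := by simp [hT]
    have hST : ∀ a ∈ S1, a ∉ T := by
      intro a ha h
      simp [hT, ha] at h
    have hcov : ∀ a ∈ s, a ∈ S1 ∨ a = p ∨ a ∈ T := by
      intro a ha
      by_cases h1 : a ∈ S1
      · exact Or.inl h1
      by_cases h2 : a = p
      · exact Or.inr (Or.inl h2)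
      · exact Or.inr (Or.inr (by simp [hT, ha, h1, h2]))
    set c := f p with hc
    have hlow : ∀ a ∈ S1, f a ≤ c := fun a ha => hS1l a ha p hp
    have hhigh : ∀ a ∈ T, c ≤ f a := fun a ha => hpmin a (Finset.mem_of_mem_erase ha)
    have olt : ∀ c, IsOpen {u | f u < c} := fun c => isOpen_lt f.continuous continuous_const
    have ogt : ∀ c, IsOpen {u | c < f u} := fun c => isOpen_lt continuous_const f.continuous
    have hsplit : ∀ a, v = μ.real (Metric.ball a r ∩ {u | f u < c}) +
        μ.real (Metric.ball a r ∩ {u | c < f u}) := by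
      intro a
      rw [← split_meas μ f hf0 c _ Metric.isBounded_ball, hball]
    have bfin : ∀ (a : X) (W : Set X), μ (Metric.ball a r ∩ W) ≠ ⊤ := fun a W =>
      ne_top_of_le_ne_top (measure_ball_lt_top (x := a) (r := r)).ne (measure_mono inter_subset_left)
    have hL1 : ∀ a, f a ≤ c → v / 2 ≤ μ.real (Metric.ball a r ∩ {u | f u < c}) := by
      intro a ha
      rw [← (half_ball μ f hf0 a r).1]
      apply measureReal_mono _ (bfin _ _)
      rintro u ⟨h1, h2⟩
      exact ⟨h1, lt_of_lt_of_le h2 ha⟩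
    have hL2 : ∀ a, c ≤ f a → μ.real (Metric.ball a r ∩ {u | f u < c}) ≤ v / 2 := by
      intro a ha
      rw [← (half_ball μ f hf0 a r).1]
      apply measureReal_mono _ (bfin _ _)
      rintro u ⟨h1, h2⟩
      exact ⟨h1, lt_of_lt_of_le h2 ha⟩
    set Q := ∑ a ∈ S1, μ.real (Metric.ball a r ∩ {u | f u < c}) with hQ
    have hQle : Q ≤ k * v := by
      rw [hQ, ← hS1c, ← nsmul_eq_mul]
      apply Finset.sum_le_card_nsmul
      intro a _
      have := hsplit a
      have h0 : 0 ≤ μ.real (Metric.ball a r ∩ {u | c < f u}) := measureReal_nonneg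
      linarith
    have hkey : ∑ a ∈ T, μ.real (Metric.ball a r ∩ {u | f u < c}) + v / 2 ≤ Q := by
      have gen1 : k * (v / 2) ≤ Q := by
        rw [hQ, ← hS1c, ← nsmul_eq_mul]
        exact Finset.card_nsmul_le_sum _ _ _ fun a ha => hL1 a (hlow a ha)
      have gen2 : ∑ a ∈ T, μ.real (Metric.ball a r ∩ {u | f u < c}) ≤ k * (v / 2) := by
        rw [← hTc, ← nsmul_eq_mul]
        exact Finset.sum_le_card_nsmul _ _ _ fun a ha => hL2 a (hhigh a ha)
      rcases le_or_gt (c + r) (f x) with h | h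
      · have hxT : x ∈ T := by
          rcases hcov x hx with h1 | h1 | h1
          · have := hlow x h1; linarith
          · rw [h1] at h; linarith
          · exact h1
        have hz : μ.real (Metric.ball x r ∩ {u | f u < c}) = 0 := by
          have : Metric.ball x r ∩ {u | f u < c} = ∅ := by
            ext u
            simp only [mem_inter_iff, Metric.mem_ball, mem_ofPred_eq, mem_empty_iff_false, iff_false,
              not_and, not_lt, dist_eq_norm]
            intro hu
            have := abs_le.mp (hfd u x)
            linarith
          rw [this]; simp
        have : ∑ a ∈ T, μ.real (Metric.ball a r ∩ {u | f u < c}) ≤ ((k:ℝ) - 1) * (v / 2) := by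
          rw [← Finset.add_sum_erase _ _ hxT, hz, zero_add]
          have h5 : (((T.erase x).card : ℕ) : ℝ) = (k:ℝ) - 1 := by
            rw [Finset.card_erase_of_mem hxT, hTc, Nat.cast_sub hkpos]; simp
          rw [← h5, ← nsmul_eq_mul]
          exact Finset.sum_le_card_nsmul _ _ _ fun a ha => hL2 a (hhigh a (Finset.mem_of_mem_erase ha))
        linarith
      · have h' : f y < c - r ∨ f y = c - r ∨ c - r < f y := lt_trichotomy _ _
        have hyc : f y ≤ c - r := by linarith
        have hyS : y ∈ S1 := by
          rcases hcov y hy with h1 | h1 | h1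
          · exact h1
          · rw [h1] at hyc; linarith
          · have := hhigh y h1; linarith
        have hz : μ.real (Metric.ball y r ∩ {u | f u < c}) = v := by
          have : Metric.ball y r ∩ {u | f u < c} = Metric.ball y r := by
            apply inter_eq_left.mpr
            intro u hu
            rw [Metric.mem_ball, dist_eq_norm] at hu
            have := abs_le.mp (hfd u y)
            show f u < c
            linarith
          rw [this, hball]
        have : v + ((k:ℝ) - 1) * (v / 2) ≤ Q := by
          rw [hQ, ← Finset.add_sum_erase _ _ hyS, hz]
          have h5 : (((S1.erase y).card : ℕ) : ℝ) = (k:ℝ) - 1 := by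
            rw [Finset.card_erase_of_mem hyS, hS1c, Nat.cast_sub hkpos]; simp
          rw [← h5, ← nsmul_eq_mul]
          gcongr
          exact Finset.card_nsmul_le_sum _ _ _ fun a ha => hL1 a (hlow a (Finset.mem_of_mem_erase ha))
        linarith
    -- the second set
    set V := (⋃ a ∈ T, Metric.ball a r) ∪ (Metric.ball p r ∩ {u | f u < c}) with hV
    have Vo : IsOpen V := (hUo T).union (Metric.isOpen_ball.inter (olt c))
    have Vb : Bornology.IsBounded V :=
      (hUb T).union (Metric.isBounded_ball.subset inter_subset_left)
    have hVd : Disjoint (⋃ a ∈ T, Metric.ball a r) (Metric.ball p r ∩ {u | f u < c}) := by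
      rw [disjoint_iUnion₂_left]
      intro a ha
      exact (hdisj a (hTs ha) p hps (by rintro rfl; exact hpT ha)).mono_right inter_subset_left
    have hVm : μ.real V = k * v + v / 2 := by
      rw [hV, measureReal_union hVd (Metric.isOpen_ball.inter (olt c)).measurableSet
        (hUb T).measure_lt_top.ne (bfin _ _), hUv T hTs, hTc, (half_ball μ f hf0 p r).1]
    have hVc : μ.real (V ∩ {u | f u < c}) ≤ Q := by
      rw [hV, union_inter_distrib_right]
      refine (measureReal_union_le _ _).trans ?_
      rw [hU T hTs _ (olt c), inter_assoc, inter_self, (half_ball μ f hf0 p r).1]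
      exact hkey
    obtain ⟨R, hR⟩ := Vb.subset_ball 0
    have hVR : μ.real (V ∩ {u | f u < max R c}) = k * v + v / 2 := by
      rw [← hVm]
      congr 1
      apply inter_eq_left.mpr
      intro u hu
      have h1 := hR hu
      rw [mem_ball_zero_iff] at h1
      have h2 := hfd u 0
      simp only [map_zero, sub_zero] at h2
      exact lt_of_lt_of_le (lt_of_le_of_lt ((le_abs_self _).trans h2) h1) (le_max_left _ _)
    obtain ⟨b, ⟨hcb, -⟩, hbQ⟩ := intermediate_value_Icc (le_max_right R c)
      (cont_cut μ f hf0 V Vb).continuousOn ⟨hVc, by rw [hVR]; linarith⟩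
    simp only at hbQ
    have hV2 : μ.real (V ∩ {u | b < f u}) = k * v + v / 2 - Q := by
      have := split_meas μ f hf0 b V Vb
      linarith
    have hA1 : μ.real ((⋃ a ∈ S1, Metric.ball a r) ∩ {u | f u < c}) = Q := hU S1 hS1 _ (olt c)
    have hpS : insert p S1 ⊆ s := Finset.insert_subset hps hS1
    have hA2 : μ.real ((⋃ a ∈ insert p S1, Metric.ball a r) ∩ {u | c < f u}) = k * v + v / 2 - Q := by
      rw [hU _ hpS _ (ogt c), Finset.sum_insert hpS1, (half_ball μ f hf0 p r).2]
      have h1 : ∑ a ∈ S1, μ.real (Metric.ball a r ∩ {u | c < f u}) + Q = k * v := by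
        rw [hQ, ← Finset.sum_add_distrib, ← hS1c, ← nsmul_eq_mul, ← Finset.sum_const]
        apply Finset.sum_congr rfl
        intro a _
        rw [add_comm, ← hsplit a]
      linarith
    have r1 := bm ((⋃ a ∈ S1, Metric.ball a r) ∩ {u | f u < c}) (V ∩ {u | f u < b})
      (Metric.ball 0 1 ∩ {u | f u < (b + c) / 2})
      ((hUo _).inter (olt c)) (Vo.inter (olt b)) (Metric.isOpen_ball.inter (olt _))
      ((hUb _).subset inter_subset_left) (Vb.subset inter_subset_left)
      (Metric.isBounded_ball.subset inter_subset_left) (by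
        rintro a ⟨ha, hac⟩ a' ⟨ha', hab⟩
        simp only [mem_ofPred_eq] at hac hab
        refine ⟨?_, ?_⟩
        · simp only [mem_iUnion, exists_prop] at ha
          obtain ⟨x, hx, hax⟩ := ha
          rcases ha' with ha' | ha'
          · simp only [mem_iUnion, exists_prop] at ha'
            obtain ⟨y, hy, hay⟩ := ha'
            exact hmid x (hS1 hx) y (hTs hy) (by rintro rfl; exact hST _ hx hy) a hax a' hay
          · exact hmid x (hS1 hx) p hps (by rintro rfl; exact hpS1 hx) a hax a' ha'.1
        · simp only [mem_ofPred_eq, map_smul, map_add, smul_eq_mul]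
          linarith) Q hA1.ge hbQ.ge
    have r2 := bm ((⋃ a ∈ insert p S1, Metric.ball a r) ∩ {u | c < f u}) (V ∩ {u | b < f u})
      (Metric.ball 0 1 ∩ {u | (b + c) / 2 < f u})
      ((hUo _).inter (ogt c)) (Vo.inter (ogt b)) (Metric.isOpen_ball.inter (ogt _))
      ((hUb _).subset inter_subset_left) (Vb.subset inter_subset_left)
      (Metric.isBounded_ball.subset inter_subset_left) (by
        rintro a ⟨ha, hac⟩ a' ⟨ha', hab⟩
        simp only [mem_ofPred_eq] at hac hab
        refine ⟨?_, ?_⟩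
        · simp only [mem_iUnion, exists_prop] at ha
          obtain ⟨x, hx, hax⟩ := ha
          rcases ha' with ha' | ha'
          · simp only [mem_iUnion, exists_prop] at ha'
            obtain ⟨y, hy, hay⟩ := ha'
            refine hmid x (hpS hx) y (hTs hy) ?_ a hax a' hay
            rintro rfl
            rcases Finset.mem_insert.mp hx with h | h
            · rw [h] at hy; exact hpT hy
            · exact hST _ h hy
          · have h1 : f a' < c := ha'.2
            linarith
        · simp only [mem_ofPred_eq, map_smul, map_add, smul_eq_mul]
          linarith) (k * v + v / 2 - Q) hA2.ge hV2.ge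
    have r3 := split_meas μ f hf0 ((b + c) / 2) (Metric.ball (0:X) 1) Metric.isBounded_ball
    rw [hk]; push_cast; linarith
end

theorem delta_additive_card_bound
    (X : Type*) [NormedAddCommGroup X] [NormedSpace ℝ X]
    [FiniteDimensional ℝ X] (d : ℕ) (hd : 1 ≤ d)
    (hdim : Module.finrank ℝ X = d)
    (δ : ℝ) (hδ0 : 0 < δ) (hδ2 : δ < 2)
    (S : Set X) (hunit : ∀ x ∈ S, ‖x‖ = 1)
    (hsum : ∀ x ∈ S, ∀ y ∈ S, x ≠ y → ‖x + y‖ ≤ δ) :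
    S.Finite ∧ (Nat.card S : ℝ) ≤ 2 * (2 / (2 - δ)) ^ d := by
  letI : MeasurableSpace X := borel X
  haveI : BorelSpace X := ⟨rfl⟩
  have hpos : 0 < (2 - δ) / 2 := by linarith
  have key : ∀ s : Finset X, (s : Set X) ⊆ S → (s.card : ℝ) ≤ 2 * (2 / (2 - δ)) ^ d := by
    intro s hs
    have := finset_bound d hdim δ hδ0 hδ2 s (fun x hx => hunit x (hs hx))
      (fun x hx y hy => hsum x (hs hx) y (hs hy))
    have e : (2 / (2 - δ)) ^ d = (((2 - δ) / 2) ^ d)⁻¹ := by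
      rw [← inv_pow, inv_div]
    rw [e, ← div_eq_mul_inv, le_div_iff₀ (by positivity)]
    exact this
  have hfin : S.Finite := by
    by_contra hinf
    obtain ⟨n, hn⟩ := exists_nat_gt (2 * (2 / (2 - δ)) ^ d)
    obtain ⟨t, ht, htc⟩ := Set.Infinite.exists_subset_card_eq hinf n
    have := key t ht
    rw [htc] at this
    linarith
  refine ⟨hfin, ?_⟩
  have := key hfin.toFinset (by simp)
  rw [Nat.card_eq_card_finite_toFinset hfin]
  exact this
end

section
/- For every δ with 2/3 < δ < 2 there exists ε > 0 such that for all sufficiently large d there exist a norm ‖·‖ on ℝ^d (a function N : ℝ^d → ℝ satisfying N(x) = 0 iff x = 0, N(cx) = |c|·N(x), and N(x+y) ≤ N(x) + N(y)) and a finite set S of vectors in ℝ^d with |S| > (1+ε)^d, N(x) = 1 for all x ∈ S, and N(x + y) ≤ δ for all distinct x, y ∈ S. -/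
noncomputable def signP (n : ℕ) : Finset (Fin n → ℝ) := Fintype.piFinset (fun _ => ({1, -1} : Finset ℝ))

lemma mem_signP {n : ℕ} {u : Fin n → ℝ} : u ∈ signP n ↔ ∀ k, u k = 1 ∨ u k = -1 := by
  simp [signP]

lemma card_signP (n : ℕ) : ((signP n).card : ℝ) = 2 ^ n := by
  have h : ({1, -1} : Finset ℝ).card = 2 := Finset.card_pair (by norm_num)
  simp [signP, h]

lemma sum_exp_signP {n : ℕ} (t : ℝ) (u : Fin n → ℝ) (hu : u ∈ signP n) :
    ∑ v ∈ signP n, Real.exp (t * ∑ k, u k * v k) = (2 * Real.cosh t) ^ n := by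
  have h1 : ∀ v : Fin n → ℝ, Real.exp (t * ∑ k, u k * v k)
      = ∏ k, Real.exp (t * (u k * v k)) := by
    intro v; rw [Finset.mul_sum, Real.exp_sum]
  simp_rw [h1]
  rw [signP, ← Finset.prod_univ_sum (fun _ => ({1, -1} : Finset ℝ))
    (fun k a => Real.exp (t * (u k * a)))]
  have h2 : ∀ k, ∑ a ∈ ({1, -1} : Finset ℝ), Real.exp (t * (u k * a)) = 2 * Real.cosh t := by
    intro k
    rw [Finset.sum_pair (by norm_num), Real.cosh_eq]
    rcases mem_signP.1 hu k with h | h <;> rw [h] <;> simp <;> ring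
  simp [h2]

lemma bad_card {n : ℕ} (η : ℝ) (hη : 0 < η) (u : Fin n → ℝ) (hu : u ∈ signP n) :
    (((signP n).filter (fun v => η * n ≤ |∑ k, u k * v k|)).card : ℝ) * Real.exp (η ^ 2 * n / 2)
      ≤ 2 * 2 ^ n := by
  set B := (signP n).filter (fun v => η * n ≤ |∑ k, u k * v k|) with hB
  have h1 : (B.card : ℝ) * Real.exp (η ^ 2 * n) ≤
      ∑ v ∈ signP n, (Real.exp (η * ∑ k, u k * v k) + Real.exp ((-η) * ∑ k, u k * v k)) := by
    calc (B.card : ℝ) * Real.exp (η ^ 2 * n) = ∑ v ∈ B, Real.exp (η ^ 2 * n) := by simp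
      _ ≤ ∑ v ∈ B, (Real.exp (η * ∑ k, u k * v k) + Real.exp ((-η) * ∑ k, u k * v k)) := by
        apply Finset.sum_le_sum
        intro v hv
        have hv2 := (Finset.mem_filter.1 hv).2
        rcases le_abs.1 hv2 with h | h
        · have : Real.exp (η ^ 2 * n) ≤ Real.exp (η * ∑ k, u k * v k) :=
            Real.exp_le_exp.2 (by nlinarith)
          have := Real.exp_pos ((-η) * ∑ k, u k * v k)
          linarith
        · have : Real.exp (η ^ 2 * n) ≤ Real.exp ((-η) * ∑ k, u k * v k) :=
            Real.exp_le_exp.2 (by nlinarith)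
          have := Real.exp_pos (η * ∑ k, u k * v k)
          linarith
      _ ≤ _ := Finset.sum_le_sum_of_subset_of_nonneg (Finset.filter_subset _ _)
          (fun _ _ _ => by positivity)
  rw [Finset.sum_add_distrib, sum_exp_signP _ _ hu, sum_exp_signP _ _ hu, Real.cosh_neg] at h1
  have h2 : (2 * Real.cosh η) ^ n ≤ 2 ^ n * Real.exp (η ^ 2 * n / 2) := by
    rw [mul_pow]
    gcongr
    calc Real.cosh η ^ n ≤ Real.exp (η ^ 2 / 2) ^ n := by
          have := Real.cosh_pos η
          gcongr
          exact Real.cosh_le_exp_half_sq η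
      _ = _ := by rw [← Real.exp_nat_mul]; congr 1; ring
  have h3 : Real.exp (η ^ 2 * n) = Real.exp (η ^ 2 * n / 2) * Real.exp (η ^ 2 * n / 2) := by
    rw [← Real.exp_add]; congr 1; ring
  rw [h3] at h1
  have h4 := Real.exp_pos (η ^ 2 * n / 2)
  refine le_of_mul_le_mul_right ?_ h4
  linarith

lemma exists_code (n : ℕ) (η : ℝ) (hη : 0 < η) (hη1 : η ≤ 1) :
    ∃ S : Finset (Fin n → ℝ), S ⊆ signP n ∧ Real.exp (η ^ 2 * n / 2) ≤ 2 * S.card ∧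
      ∀ u ∈ S, ∀ v ∈ S, u ≠ v → |∑ k, u k * v k| < η * n := by
  classical
  let F := (signP n).powerset.filter
    (fun S => ∀ u ∈ S, ∀ v ∈ S, u ≠ v → |∑ k, u k * v k| < η * n)
  have hF : F.Nonempty := ⟨∅, by simp [F]⟩
  obtain ⟨S, hSF, hmax⟩ := F.exists_max_image Finset.card hF
  obtain ⟨hS, hgood⟩ := Finset.mem_filter.1 hSF
  rw [Finset.mem_powerset] at hS
  refine ⟨S, hS, ?_, hgood⟩
  have hcov : signP n ⊆ S.biUnion
      (fun u => (signP n).filter (fun v => η * n ≤ |∑ k, u k * v k|)) := by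
    intro v hv
    by_contra hc
    have hc' : ∀ u ∈ S, |∑ k, u k * v k| < η * n := by
      intro u hu
      by_contra h
      exact hc (Finset.mem_biUnion.2 ⟨u, hu, Finset.mem_filter.2 ⟨hv, not_lt.1 h⟩⟩)
    have hvS : v ∉ S := by
      intro hvS
      have h := hc' v hvS
      have h1 : ∀ k, v k * v k = 1 := by
        intro k; rcases mem_signP.1 hv k with h | h <;> rw [h] <;> norm_num
      simp [h1] at h
      nlinarith [Nat.cast_nonneg (α := ℝ) n]
    have hin : insert v S ∈ F := by
      refine Finset.mem_filter.2 ⟨Finset.mem_powerset.2 (Finset.insert_subset hv hS), ?_⟩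
      intro a ha b hb hab
      rcases Finset.mem_insert.1 ha with rfl | ha1 <;> rcases Finset.mem_insert.1 hb with rfl | hb1
      · exact absurd rfl hab
      · simpa [mul_comm] using hc' b hb1
      · exact hc' a ha1
      · exact hgood a ha1 b hb1 hab
    have := hmax _ hin
    rw [Finset.card_insert_of_notMem hvS] at this
    omega
  have h1 : ((signP n).card : ℝ) ≤
      ∑ u ∈ S, (((signP n).filter (fun v => η * n ≤ |∑ k, u k * v k|)).card : ℝ) := by
    exact_mod_cast (Finset.card_le_card hcov).trans Finset.card_biUnion_le
  have hE := Real.exp_pos (η ^ 2 * n / 2)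
  have h2 : (2 : ℝ) ^ n * Real.exp (η ^ 2 * n / 2) ≤ S.card * (2 * 2 ^ n) := by
    rw [← card_signP n]
    calc _ ≤ _ := mul_le_mul_of_nonneg_right h1 hE.le
      _ = ∑ u ∈ S, (((signP n).filter (fun v => η * n ≤ |∑ k, u k * v k|)).card : ℝ)
          * Real.exp (η ^ 2 * n / 2) := by rw [Finset.sum_mul]
      _ ≤ ∑ u ∈ S, (2 * 2 ^ n : ℝ) := Finset.sum_le_sum (fun u hu => bad_card η hη u (hS hu))
      _ = _ := by simp [card_signP]
  have h3 : (0 : ℝ) < 2 ^ n := by positivity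
  refine le_of_mul_le_mul_left ?_ h3
  linarith

noncomputable def addL {n : ℕ} (S : Finset (Fin n → ℝ)) : (Fin (n + 1) → ℝ) →ₗ[ℝ] (S → ℝ) where
  toFun x := fun u => - x 0 / 3 + 4 / 3 * ((∑ k, u.1 k * x k.succ) / n)
  map_add' x y := by
    ext u
    simp only [Pi.add_apply, mul_add, Finset.sum_add_distrib]
    ring
  map_smul' c x := by
    ext u
    simp only [Pi.smul_apply, smul_eq_mul, RingHom.id_apply]
    have : ∑ k, u.1 k * (c * x k.succ) = c * ∑ k, u.1 k * x k.succ := by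
      rw [Finset.mul_sum]; exact Finset.sum_congr rfl (fun _ _ => by ring)
    rw [this]; ring

lemma addL_cons {n : ℕ} (S : Finset (Fin n → ℝ)) (u : S) (v : Fin n → ℝ) :
    addL S (Fin.cons 1 v) u = - 1 / 3 + 4 / 3 * ((∑ k, u.1 k * v k) / n) := by
  simp [addL]

theorem exists_norm_with_exponential_delta_additive_set
    (δ : ℝ) (hδ1 : 2 / 3 < δ) (hδ2 : δ < 2) :
    ∃ ε : ℝ, 0 < ε ∧ ∃ D : ℕ, ∀ d : ℕ, D ≤ d →
      ∃ N : (Fin d → ℝ) → ℝ,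
        (∀ x, N x = 0 ↔ x = 0) ∧
        (∀ (c : ℝ) (x), N (c • x) = |c| * N x) ∧
        (∀ x y, N (x + y) ≤ N x + N y) ∧
        ∃ S : Finset (Fin d → ℝ),
          (1 + ε) ^ d < (S.card : ℝ) ∧
          (∀ x ∈ S, N x = 1) ∧
          (∀ x ∈ S, ∀ y ∈ S, x ≠ y → N (x + y) ≤ δ) := by
  classical
  obtain ⟨η, hη, hη2, hηδ⟩ : ∃ η : ℝ, 0 < η ∧ η ≤ 1 / 2 ∧ 2 / 3 + 8 / 3 * η ≤ δ := by
    refine ⟨min (1 / 2) ((δ - 2 / 3) * (3 / 8)), ?_, min_le_left _ _, ?_⟩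
    · apply lt_min <;> linarith
    · have := min_le_right (1 / 2) ((δ - 2 / 3) * (3 / 8)); linarith
  refine ⟨Real.exp (η ^ 2 / 4) - 1, ?_, ⌈4 / η ^ 2⌉₊ + 3, ?_⟩
  · have := Real.add_one_lt_exp (x := η ^ 2 / 4) (by positivity)
    have : 0 < η ^ 2 / 4 := by positivity
    linarith
  intro d hd
  obtain ⟨n, rfl⟩ : ∃ n, d = n + 1 := ⟨d - 1, by omega⟩
  have hn : 4 / η ^ 2 + 2 ≤ (n : ℝ) := by
    have h1 : ⌈4 / η ^ 2⌉₊ + 2 ≤ n := by omega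
    have h2 : ((⌈4 / η ^ 2⌉₊ : ℕ) : ℝ) + 2 ≤ n := by exact_mod_cast h1
    linarith [Nat.le_ceil (4 / η ^ 2)]
  have hη0 : 0 < η ^ 2 := by positivity
  have hn0 : (0 : ℝ) < n := by
    have : 0 < 4 / η ^ 2 := by positivity
    linarith
  have hn' : 4 + 2 * η ^ 2 ≤ η ^ 2 * n := by
    have h := mul_le_mul_of_nonneg_left hn hη0.le
    rw [mul_add, mul_div_cancel₀ _ hη0.ne'] at h
    linarith
  obtain ⟨S, hS, hcard, hgood⟩ := exists_code n η hη (by linarith)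
  have hself : ∀ u ∈ S, (∑ k, u k * u k) / (n : ℝ) = 1 := by
    intro u hu
    have h1 : ∀ k, u k * u k = 1 := by
      intro k; rcases mem_signP.1 (hS hu) k with h | h <;> rw [h] <;> norm_num
    simp [h1, hn0.ne']
  have hne : ∀ u ∈ S, ∀ v ∈ S, u ≠ v →
      -η ≤ (∑ k, u k * v k) / (n : ℝ) ∧ (∑ k, u k * v k) / (n : ℝ) ≤ η := by
    intro u hu v hv huv
    have h := abs_lt.1 (hgood u hu v hv huv)
    constructor
    · rw [le_div_iff₀ hn0]; linarith
    · rw [div_le_iff₀ hn0]; linarith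
  have hnorm : ∀ v ∈ S, ‖(Fin.cons 1 v : Fin (n + 1) → ℝ)‖ ≤ 1 := by
    intro v hv
    rw [pi_norm_le_iff_of_nonneg zero_le_one]
    intro k
    refine Fin.cases ?_ (fun k => ?_) k
    · simp
    · rcases mem_signP.1 (hS hv) k with h | h <;> simp [h]
  refine ⟨fun x => max (‖x‖ / 3) ‖addL S x‖, ?_, ?_, ?_,
    S.image (fun v => (Fin.cons 1 v : Fin (n + 1) → ℝ)), ?_, ?_, ?_⟩
  · intro x
    constructor
    · intro h
      have h1 : ‖x‖ / 3 ≤ 0 := h ▸ le_max_left _ _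
      exact norm_le_zero_iff.1 (by linarith)
    · rintro rfl; simp
  · intro c x
    simp only [map_smul, norm_smul, Real.norm_eq_abs]
    rw [mul_max_of_nonneg _ _ (abs_nonneg c), mul_div_assoc]
  · intro x y
    apply max_le
    · have := norm_add_le x y
      have := le_max_left (‖x‖ / 3) ‖addL S x‖
      have := le_max_left (‖y‖ / 3) ‖addL S y‖
      linarith
    · rw [map_add]
      have := norm_add_le (addL S x) (addL S y)
      have := le_max_right (‖x‖ / 3) ‖addL S x‖
      have := le_max_right (‖y‖ / 3) ‖addL S y‖
      linarith
  · rw [Finset.card_image_of_injective _ (Fin.cons_right_injective (α := fun _ => ℝ) 1)]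
    rw [add_sub_cancel, ← Real.exp_nat_mul]
    have h1 : Real.exp (((n + 1 : ℕ) : ℝ) * (η ^ 2 / 4)) * 2 < Real.exp (η ^ 2 * n / 2) := by
      have h2 : (2 : ℝ) < Real.exp 1 := by
        have := Real.add_one_lt_exp (x := 1) one_ne_zero
        linarith
      calc _ < Real.exp (((n + 1 : ℕ) : ℝ) * (η ^ 2 / 4)) * Real.exp 1 := by
            gcongr
        _ = Real.exp (((n + 1 : ℕ) : ℝ) * (η ^ 2 / 4) + 1) := by rw [Real.exp_add]
        _ ≤ _ := by
          apply Real.exp_le_exp.2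
          push_cast
          nlinarith
    linarith
  · intro x hx
    obtain ⟨v, hv, rfl⟩ := Finset.mem_image.1 hx
    apply le_antisymm
    · apply max_le
      · linarith [hnorm v hv]
      · rw [pi_norm_le_iff_of_nonneg zero_le_one]
        intro u
        rw [addL_cons, Real.norm_eq_abs, abs_le]
        by_cases huv : u.1 = v
        · rw [huv, hself v hv]; norm_num
        · have := hne u.1 u.2 v hv huv
          constructor <;> linarith [this.1, this.2]
    · refine le_trans ?_ (le_max_right _ _)
      refine le_trans ?_ (norm_le_pi_norm _ (⟨v, hv⟩ : S))
      rw [addL_cons, hself v hv]; norm_num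
  · intro x hx y hy hxy
    obtain ⟨v, hv, rfl⟩ := Finset.mem_image.1 hx
    obtain ⟨w, hw, rfl⟩ := Finset.mem_image.1 hy
    have hvw : v ≠ w := by rintro rfl; exact hxy rfl
    apply max_le
    · have := norm_add_le (Fin.cons 1 v : Fin (n + 1) → ℝ) (Fin.cons 1 w)
      linarith [hnorm v hv, hnorm w hw]
    · rw [pi_norm_le_iff_of_nonneg (by linarith)]
      intro u
      rw [map_add, Pi.add_apply, addL_cons, addL_cons, Real.norm_eq_abs, abs_le]
      by_cases huv : u.1 = v
      · have := hne v hv w hw hvw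
        rw [huv, hself v hv]
        constructor <;> linarith [this.1, this.2]
      · have h1 := hne u.1 u.2 v hv huv
        by_cases huw : u.1 = w
        · have := hne w hw v hv hvw.symm
          rw [huw, hself w hw]
          constructor <;> linarith [this.1, this.2]
        · have h2 := hne u.1 u.2 w hw huw
          constructor <;> linarith [h1.1, h1.2, h2.1, h2.2]
end

section
/- Let X be a d-dimensional real normed space with d ≠ 1 and d ≠ 3. If S is a set of unit vectors in X such that ‖x + y‖ ≤ 2/3 for all distinct x, y ∈ S, then |S| ≤ d. -/
theorem tta_aux {X : Type*} [NormedAddCommGroup X] [NormedSpace ℝ X]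
    (T : Finset X) (hunit : ∀ x ∈ T, ‖x‖ = 1)
    (hsum : ∀ x ∈ T, ∀ y ∈ T, x ≠ y → ‖x + y‖ ≤ 2 / 3)
    (h3 : 3 ≤ T.card) (h4 : T.card ≠ 4) :
    LinearIndepOn ℝ id (T : Set X) := by
  classical
  rw [linearIndepOn_finset_iff]
  intro c hc
  have key : ∀ x ∈ T, c x = (∑ y ∈ T, c y) / 4 := by
    intro x hx
    have hx0 : x ≠ 0 := by
      intro h
      have := hunit x hx
      simp [h] at this
    obtain ⟨g, hg, hgx⟩ := exists_dual_vector ℝ x (norm_ne_zero_iff.mpr hx0)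
    have hgx1 : g x = 1 := by
      rw [hgx, hunit x hx]; simp
    have hb : ∀ u ∈ T, ∀ v ∈ T, u ≠ v → |g u + g v| ≤ 2 / 3 := by
      intro u hu v hv huv
      have h1 := g.le_opNorm (u + v)
      rw [hg, one_mul, map_add, Real.norm_eq_abs] at h1
      exact h1.trans (hsum u hu v hv huv)
    have hle : ∀ u ∈ T, x ≠ u → g u ≤ -1 / 3 := by
      intro u hu hxu
      have := (abs_le.mp (hb x hx u hu hxu)).2
      linarith
    have hval : ∀ y ∈ T, g y = (if y = x then 4 / 3 else 0) - 1 / 3 := by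
      intro y hy
      split_ifs with hyx
      · rw [hyx, hgx1]; norm_num
      · obtain ⟨z, hz, hzn⟩ : ∃ z ∈ T, z ∉ ({x, y} : Finset X) := by
          apply Finset.exists_mem_notMem_of_card_lt_card
          have : ({x, y} : Finset X).card ≤ 2 := Finset.card_le_two
          omega
        simp only [Finset.mem_insert, Finset.mem_singleton, not_or] at hzn
        have h1 := hle y hy (Ne.symm hyx)
        have h2 := hle z hz (Ne.symm hzn.1)
        have h3 := (abs_le.mp (hb y hy z hz (Ne.symm hzn.2))).1
        linarith
    have h0 := congrArg g hc
    rw [map_sum, map_zero] at h0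
    have h5 : ∑ y ∈ T, g (c y • id y)
        = ∑ y ∈ T, ((if y = x then c y * (4 / 3) else 0) - c y * (1 / 3)) := by
      apply Finset.sum_congr rfl
      intro y hy
      rw [map_smul, id, hval y hy, smul_eq_mul]
      split_ifs <;> ring
    rw [h5, Finset.sum_sub_distrib, Finset.sum_ite_eq' T x, if_pos hx, ← Finset.sum_mul] at h0
    linarith
  have hs : ∑ y ∈ T, c y = T.card * ((∑ y ∈ T, c y) / 4) := by
    conv_lhs => rw [Finset.sum_congr rfl key]
    rw [Finset.sum_const, nsmul_eq_mul]
  have hs0 : ∑ y ∈ T, c y = 0 := by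
    have h6 : (∑ y ∈ T, c y) * ((T.card : ℝ) - 4) = 0 := by linarith
    rcases mul_eq_zero.mp h6 with h | h
    · exact h
    · exact absurd (by exact_mod_cast sub_eq_zero.mp h) h4
  intro x hx
  rw [key x hx, hs0]; simp

theorem tta_card {X : Type*} [NormedAddCommGroup X] [NormedSpace ℝ X]
    [FiniteDimensional ℝ X]
    (T : Finset X) (hunit : ∀ x ∈ T, ‖x‖ = 1)
    (hsum : ∀ x ∈ T, ∀ y ∈ T, x ≠ y → ‖x + y‖ ≤ 2 / 3)
    (h3 : 3 ≤ T.card) (h4 : T.card ≠ 4) : T.card ≤ Module.finrank ℝ X := by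
  have h := (tta_aux T hunit hsum h3 h4).linearIndependent.fintype_card_le_finrank
  simpa using h

theorem tta_all {X : Type*} [NormedAddCommGroup X] [NormedSpace ℝ X]
    [FiniteDimensional ℝ X]
    (hd1 : Module.finrank ℝ X ≠ 1) (hd3 : Module.finrank ℝ X ≠ 3)
    (T : Finset X) (hunit : ∀ x ∈ T, ‖x‖ = 1)
    (hsum : ∀ x ∈ T, ∀ y ∈ T, x ≠ y → ‖x + y‖ ≤ 2 / 3) :
    T.card ≤ Module.finrank ℝ X := by
  rcases T.eq_empty_or_nonempty with rfl | ⟨x, hx⟩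
  · simp
  have hpos : 0 < Module.finrank ℝ X := by
    have hx0 : x ≠ 0 := by
      intro h
      have := hunit x hx
      simp [h] at this
    have : Nontrivial X := ⟨x, 0, hx0⟩
    exact Module.finrank_pos
  by_cases h3 : 3 ≤ T.card
  · by_cases h4 : T.card = 4
    · obtain ⟨U, hU, hc⟩ := Finset.exists_subset_card_eq h3
      have := tta_card U (fun x hx => hunit x (hU hx))
        (fun x hx y hy => hsum x (hU hx) y (hU hy)) (by omega) (by omega)
      omega
    · exact tta_card T hunit hsum h3 h4
  · omega

theorem two_thirds_additive_card_le_dim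
    (X : Type*) [NormedAddCommGroup X] [NormedSpace ℝ X]
    [FiniteDimensional ℝ X] (d : ℕ)
    (hdim : Module.finrank ℝ X = d) (hd1 : d ≠ 1) (hd3 : d ≠ 3)
    (S : Set X) (hunit : ∀ x ∈ S, ‖x‖ = 1)
    (hsum : ∀ x ∈ S, ∀ y ∈ S, x ≠ y → ‖x + y‖ ≤ 2 / 3) :
    S.Finite ∧ Nat.card S ≤ d := by
  subst hdim
  have hall : ∀ T : Finset X, (T : Set X) ⊆ S → T.card ≤ Module.finrank ℝ X :=
    fun T hT => tta_all hd1 hd3 T (fun x hx => hunit x (hT hx))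
      (fun x hx y hy => hsum x (hT hx) y (hT hy))
  have hfin : S.Finite := by
    by_contra h
    obtain ⟨T, hT, hc⟩ := Set.Infinite.exists_subset_card_eq h (Module.finrank ℝ X + 1)
    have := hall T hT
    omega
  refine ⟨hfin, ?_⟩
  have := hall hfin.toFinset (by simp)
  rwa [Nat.card_coe_set_eq, Set.ncard_eq_toFinset_card S hfin]
end

section
/- Let X be a 3-dimensional real normed space. If S is a set of unit vectors in X such that ‖x + y‖ ≤ 2/3 for all distinct x, y ∈ S, then |S| ≤ 4. -/
theorem aux_no_five
    (X : Type*) [NormedAddCommGroup X] [NormedSpace ℝ X]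
    (hdim : Module.finrank ℝ X = 3)
    (v : Fin 5 → X) (hunit : ∀ i, ‖v i‖ = 1)
    (hsum : ∀ i j, i ≠ j → ‖v i + v j‖ ≤ 2 / 3) : False := by
  have key : ∀ i, ∃ f : X →L[ℝ] ℝ, ∀ j, f (v j) = if j = i then 1 else -1/3 := by
    intro i
    obtain ⟨f, hf1, hf2⟩ := exists_dual_vector ℝ (v i) (by
      intro h
      have := hunit i
      simp [h] at this)
    have hfi : f (v i) = 1 := by simpa [hunit i] using hf2
    have hb : ∀ j k, j ≠ k → |f (v j) + f (v k)| ≤ 2/3 := by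
      intro j k hjk
      have h := f.le_opNorm (v j + v k)
      rw [hf1, one_mul, map_add, Real.norm_eq_abs] at h
      exact h.trans (hsum j k hjk)
    refine ⟨f, fun j => ?_⟩
    split_ifs with hj
    · rw [hj, hfi]
    · obtain ⟨k, hki, hkj⟩ : ∃ k : Fin 5, k ≠ i ∧ k ≠ j := by
        exact (by decide : ∀ a b : Fin 5, ∃ k : Fin 5, k ≠ a ∧ k ≠ b) i j
      have h1 := abs_le.1 (hb i j (Ne.symm hj))
      have h2 := abs_le.1 (hb i k (Ne.symm hki))
      have h3 := abs_le.1 (hb j k (Ne.symm hkj))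
      linarith [h1.2, h2.2, h3.1]
  have hli : LinearIndependent ℝ v := by
    rw [Fintype.linearIndependent_iff]
    intro c hc
    have e : ∀ i, ∑ j, c j * (if j = i then (1:ℝ) else -1/3) = 0 := by
      intro i
      obtain ⟨f, hf⟩ := key i
      have := congrArg f hc
      simpa only [map_sum, map_smul, smul_eq_mul, hf, map_zero] using this
    have e0 := e 0
    have e1 := e 1
    have e2 := e 2
    have e3 := e 3
    have e4 := e 4
    simp [Fin.sum_univ_five] at e0 e1 e2 e3 e4
    intro i
    fin_cases i <;> simp <;> linarith
  have : FiniteDimensional ℝ X := Module.finite_of_finrank_pos (by omega)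
  have := hli.fintype_card_le_finrank
  simp [hdim] at this

theorem two_thirds_additive_card_le_four_dim_three
    (X : Type*) [NormedAddCommGroup X] [NormedSpace ℝ X]
    (hdim : Module.finrank ℝ X = 3)
    (S : Set X) (hunit : ∀ x ∈ S, ‖x‖ = 1)
    (hsum : ∀ x ∈ S, ∀ y ∈ S, x ≠ y → ‖x + y‖ ≤ 2 / 3) :
    S.Finite ∧ Nat.card S ≤ 4 := by
  have hS : S.encard ≤ 4 := by
    by_contra h
    have h5 : (5 : ℕ∞) ≤ S.encard := by
      have := Order.add_one_le_of_lt (not_le.1 h)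
      norm_num at this
      exact this
    obtain ⟨T, hTS, hT⟩ := Set.exists_subset_encard_eq h5
    have hfin : T.Finite := Set.finite_of_encard_eq_coe (k := 5) hT
    have hc : Nat.card T = 5 := by
      rw [Nat.card_coe_set_eq, Set.ncard, hT]; rfl
    have : Finite T := hfin
    let e := (Finite.equivFinOfCardEq hc).symm
    refine aux_no_five X hdim (fun i => (e i : X)) (fun i => hunit _ (hTS (e i).2)) ?_
    intro i j hij
    refine hsum _ (hTS (e i).2) _ (hTS (e j).2) ?_
    intro h
    exact hij (e.injective (Subtype.ext h))
  have hfin : S.Finite := Set.finite_of_encard_le_coe (k := 4) hS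
  refine ⟨hfin, ?_⟩
  rw [Nat.card_coe_set_eq]
  rw [← hfin.cast_ncard_eq] at hS
  exact_mod_cast hS
end

section
/- Let X be a 3-dimensional real normed space containing four distinct unit vectors x₁, x₂, x₃, x₄ with ‖x_i + x_j‖ ≤ 2/3 for all i ≠ j. Then X is isometrically isomorphic to ℓ_1^3, i.e., there is a linear isometric isomorphism from X onto ℝ³ equipped with the norm ‖(a,b,c)‖₁ = |a| + |b| + |c|; equivalently, the unit ball of X is an affine regular octahedron centered at 0. -/
theorem aux_dual {X : Type*} [NormedAddCommGroup X] [NormedSpace ℝ X]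
    (x : Fin 4 → X) (hunit : ∀ i, ‖x i‖ = 1)
    (hsum : ∀ i j, i ≠ j → ‖x i + x j‖ ≤ 2 / 3) (i : Fin 4) :
    ∃ f : X →ₗ[ℝ] ℝ, (∀ v, |f v| ≤ ‖v‖) ∧ f (x i) = 1 ∧ ∀ j, j ≠ i → f (x j) = -1/3 := by
  obtain ⟨g, hg, hgx⟩ := exists_dual_vector'' ℝ (x i)
  have hb : ∀ v, |g v| ≤ ‖v‖ := fun v => by
    have h := g.le_of_opNorm_le hg v
    simpa using h
  have h1 : g (x i) = 1 := by simpa [hunit i] using hgx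
  refine ⟨g.toLinearMap, hb, h1, fun j hj => ?_⟩
  have hk : ∃ k : Fin 4, k ≠ i ∧ k ≠ j := by
    clear * -
    revert i j; decide
  obtain ⟨k, hki, hkj⟩ := hk
  have a1 := abs_le.1 ((hb _).trans (hsum i j hj.symm))
  have a2 := abs_le.1 ((hb _).trans (hsum i k hki.symm))
  have a3 := abs_le.1 ((hb _).trans (hsum j k hkj.symm))
  rw [map_add] at a1 a2 a3
  change g (x j) = _
  linarith [a1.1, a1.2, a2.1, a2.2, a3.1, a3.2]

theorem four_two_thirds_additive_implies_ell1
    (X : Type*) [NormedAddCommGroup X] [NormedSpace ℝ X]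
    (hdim : Module.finrank ℝ X = 3)
    (x : Fin 4 → X) (hx : Function.Injective x)
    (hunit : ∀ i, ‖x i‖ = 1)
    (hsum : ∀ i j, i ≠ j → ‖x i + x j‖ ≤ 2 / 3) :
    ∃ T : X ≃ₗ[ℝ] (Fin 3 → ℝ),
      ∀ v : X, |T v 0| + |T v 1| + |T v 2| = ‖v‖ := by
  have : FiniteDimensional ℝ X := Module.finite_of_finrank_pos (by omega)
  choose f hb h1 h2 using aux_dual x hunit hsum
  let T : X →ₗ[ℝ] (Fin 3 → ℝ) := LinearMap.pi
    ![(1/2:ℝ) • (f 0 + f 1), (1/2:ℝ) • (f 0 + f 2), (1/2:ℝ) • (f 0 + f 3)]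
  have T0 : ∀ v, T v 0 = 1/2 * (f 0 v + f 1 v) := fun v => by simp [T]; ring
  have T1 : ∀ v, T v 1 = 1/2 * (f 0 v + f 2 v) := fun v => by simp [T]; ring
  have T2 : ∀ v, T v 2 = 1/2 * (f 0 v + f 3 v) := fun v => by simp [T]; ring
  let c : (Fin 3 → ℝ) → X := fun a => (a 0 * (3/2)) • (x 0 + x 1) + (a 1 * (3/2)) • (x 0 + x 2)
    + (a 2 * (3/2)) • (x 0 + x 3)
  have fc : ∀ i a, f i (c a) = a 0 * (3/2) * (f i (x 0) + f i (x 1))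
    + a 1 * (3/2) * (f i (x 0) + f i (x 2)) + a 2 * (3/2) * (f i (x 0) + f i (x 3)) := by
    intro i a; simp [c]; ring
  have f0 : ∀ a, f 0 (c a) = a 0 + a 1 + a 2 := fun a => by
    rw [fc, h1, h2 0 1 (by decide), h2 0 2 (by decide), h2 0 3 (by decide)]; ring
  have f1 : ∀ a, f 1 (c a) = a 0 - a 1 - a 2 := fun a => by
    rw [fc, h1, h2 1 0 (by decide), h2 1 2 (by decide), h2 1 3 (by decide)]; ring
  have f2 : ∀ a, f 2 (c a) = - a 0 + a 1 - a 2 := fun a => by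
    rw [fc, h1, h2 2 0 (by decide), h2 2 1 (by decide), h2 2 3 (by decide)]; ring
  have f3 : ∀ a, f 3 (c a) = - a 0 - a 1 + a 2 := fun a => by
    rw [fc, h1, h2 3 0 (by decide), h2 3 1 (by decide), h2 3 2 (by decide)]; ring
  have Tc : ∀ a, T (c a) = a := by
    intro a
    ext i
    fin_cases i
    · change T (c a) 0 = a 0
      rw [T0, f0, f1]; ring
    · change T (c a) 1 = a 1
      rw [T1, f0, f2]; ring
    · change T (c a) 2 = a 2
      rw [T2, f0, f3]; ring
  have hs : Function.Surjective T := fun a => ⟨c a, Tc a⟩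
  have hi : Function.Injective T :=
    (LinearMap.injective_iff_surjective_of_finrank_eq_finrank (by simp [hdim])).2 hs
  refine ⟨LinearEquiv.ofBijective T ⟨hi, hs⟩, fun v => ?_⟩
  change |T v 0| + |T v 1| + |T v 2| = _
  obtain ⟨a, ha⟩ : ∃ a, a = T v := ⟨_, rfl⟩
  have hv : v = c a := hi (by rw [Tc, ha])
  rw [← ha]
  apply le_antisymm
  · have b0 := abs_le.1 (hb 0 v)
    have b1 := abs_le.1 (hb 1 v)
    have b2 := abs_le.1 (hb 2 v)
    have b3 := abs_le.1 (hb 3 v)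
    have e0 := f0 a
    have e1 := f1 a
    have e2 := f2 a
    have e3 := f3 a
    rw [← hv] at e0 e1 e2 e3
    obtain ⟨b0, b0'⟩ := b0
    obtain ⟨b1, b1'⟩ := b1
    obtain ⟨b2, b2'⟩ := b2
    obtain ⟨b3, b3'⟩ := b3
    rcases abs_cases (a 0) with ⟨p, _⟩ | ⟨p, _⟩ <;>
    rcases abs_cases (a 1) with ⟨q, _⟩ | ⟨q, _⟩ <;>
    rcases abs_cases (a 2) with ⟨r, _⟩ | ⟨r, _⟩ <;>
    rw [p, q, r] <;> linarith
  · have key : ∀ (t : ℝ) (y : X), ‖y‖ ≤ 2/3 → ‖(t * (3/2)) • y‖ ≤ |t| := by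
      intro t y hy
      rw [norm_smul, Real.norm_eq_abs, abs_mul, abs_of_pos (by norm_num : (0:ℝ) < 3/2)]
      nlinarith [abs_nonneg t]
    rw [hv]
    exact norm_add₃_le.trans (add_le_add (add_le_add (key _ _ (hsum 0 1 (by decide)))
      (key _ _ (hsum 0 2 (by decide)))) (key _ _ (hsum 0 3 (by decide))))
end

section
/- Let x₁,…,x_m be nonzero vectors in ℝ^d and let 0 < δ ≤ 2. Suppose there exist vectors y₁,…,y_m ∈ ℝ^d such that (with ⟨·,·⟩ the standard inner product on ℝ^d): ⟨x_i, y_i⟩ = 1 for all i; −1 ≤ ⟨x_j, y_i⟩ ≤ δ − 1 for all distinct i, j; and −δ ≤ ⟨x_j + x_k, y_i⟩ for all i, j, k with j ≠ k. Then there exists a norm N on ℝ^d (a function N : ℝ^d → ℝ satisfying N(x) = 0 iff x = 0, N(cx) = |c|·N(x), and N(x+y) ≤ N(x)+N(y)) such that N(x_i) = 1 for all i and N(x_i + x_j) ≤ δ for all 1 ≤ i < j ≤ m. -/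
theorem norm_exists_backward
    (d m : ℕ) (x : Fin m → (Fin d → ℝ)) (hx : ∀ i, x i ≠ 0)
    (δ : ℝ) (hδ0 : 0 < δ) (hδ2 : δ ≤ 2)
    (y : Fin m → (Fin d → ℝ))
    (hy1 : ∀ i, ∑ k, x i k * y i k = 1)
    (hy2 : ∀ i j, i ≠ j → -1 ≤ ∑ k, x j k * y i k ∧ ∑ k, x j k * y i k ≤ δ - 1)
    (hy3 : ∀ i j k : Fin m, j ≠ k → -δ ≤ ∑ l, (x j l + x k l) * y i l) :
    ∃ N : (Fin d → ℝ) → ℝ,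
      (∀ v, N v = 0 ↔ v = 0) ∧
      (∀ (c : ℝ) (v), N (c • v) = |c| * N v) ∧
      (∀ v w, N (v + w) ≤ N v + N w) ∧
      (∀ i, N (x i) = 1) ∧
      (∀ i j : Fin m, i < j → N (x i + x j) ≤ δ) := by
  obtain ⟨ε, hε, h1, h2⟩ : ∃ ε : ℝ, 0 < ε ∧ ε * ‖x‖ ≤ 1 ∧ ε * (2 * ‖x‖) ≤ δ := by
    have hM : 0 ≤ ‖x‖ := norm_nonneg x
    have hP : 0 < 1 + ‖x‖ := by linarith
    refine ⟨δ / 2 / (1 + ‖x‖), by positivity, ?_, ?_⟩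
    · rw [div_mul_eq_mul_div, div_le_one hP]
      nlinarith
    · rw [div_mul_eq_mul_div, div_le_iff₀ hP]
      nlinarith
  let A : (Fin d → ℝ) → (Fin m → ℝ) := fun v i => ∑ k, v k * y i k
  have hAadd : ∀ v w, A (v + w) = A v + A w := by
    intro v w
    ext i
    simp [A, add_mul, Finset.sum_add_distrib]
  have hAsmul : ∀ (c : ℝ) v, A (c • v) = c • A v := by
    intro c v
    ext i
    simp [A, mul_assoc, Finset.mul_sum]
  have hle : ∀ i j, A (x j) i ≤ 1 ∧ -1 ≤ A (x j) i := by
    intro i j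
    by_cases h : i = j
    · subst h
      have : A (x i) i = 1 := hy1 i
      constructor <;> linarith
    · have h3 := hy2 i j h
      change -1 ≤ A (x j) i ∧ A (x j) i ≤ δ - 1 at h3
      constructor <;> linarith
  refine ⟨fun v => max ‖A v‖ (ε * ‖v‖), ?_, ?_, ?_, ?_, ?_⟩
  · intro v
    constructor
    · intro h
      have h4 : ε * ‖v‖ ≤ 0 := h ▸ le_max_right _ _
      have h5 : ‖v‖ ≤ 0 := by
        by_contra hc
        push Not at hc
        have := mul_pos hε hc
        linarith
      exact norm_le_zero_iff.mp h5
    · rintro rfl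
      have : A 0 = 0 := by
        ext i
        simp [A]
      simp [this]
  · intro c v
    simp only [hAsmul, norm_smul, Real.norm_eq_abs]
    rw [mul_max_of_nonneg _ _ (abs_nonneg c)]
    congr 1
    ring
  · intro v w
    simp only [hAadd]
    apply max_le
    · exact (norm_add_le _ _).trans (add_le_add (le_max_left _ _) (le_max_left _ _))
    · calc ε * ‖v + w‖ ≤ ε * (‖v‖ + ‖w‖) := mul_le_mul_of_nonneg_left (norm_add_le _ _) hε.le
        _ = ε * ‖v‖ + ε * ‖w‖ := by ring
        _ ≤ _ := add_le_add (le_max_right _ _) (le_max_right _ _)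
  · intro i
    apply le_antisymm
    · apply max_le
      · rw [pi_norm_le_iff_of_nonneg zero_le_one]
        intro k
        rw [Real.norm_eq_abs, abs_le]
        exact ⟨(hle k i).2, (hle k i).1⟩
      · exact (mul_le_mul_of_nonneg_left (norm_le_pi_norm x i) hε.le).trans h1
    · have h6 : ‖A (x i) i‖ ≤ ‖A (x i)‖ := norm_le_pi_norm _ i
      have h7 : A (x i) i = 1 := hy1 i
      rw [h7, norm_one] at h6
      exact h6.trans (le_max_left _ _)
  · intro j k hjk
    apply max_le
    · rw [pi_norm_le_iff_of_nonneg hδ0.le]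
      intro i
      rw [Real.norm_eq_abs, abs_le]
      refine ⟨hy3 i j k hjk.ne, ?_⟩
      rw [hAadd, Pi.add_apply]
      by_cases hj : i = j
      · have h8 : A (x k) i ≤ δ - 1 := (hy2 i k (hj ▸ hjk.ne)).2
        have := (hle i j).1
        linarith
      · have h8 : A (x j) i ≤ δ - 1 := (hy2 i j hj).2
        have := (hle i k).1
        linarith
    · refine (mul_le_mul_of_nonneg_left ?_ hε.le).trans h2
      have := norm_add_le (x j) (x k)
      have := norm_le_pi_norm x j
      have := norm_le_pi_norm x k
      linarith
end

section
/- Let m ≥ 3 and let x₁,…,x_m and y₁,…,y_m be vectors in ℝ^d (with ⟨·,·⟩ the standard inner product) satisfying: ⟨x_i, y_i⟩ = 1 for all i; ⟨x_j, y_i⟩ ≤ −1/3 for all distinct i, j; and ⟨x_j + x_k, y_i⟩ ≥ −2/3 for all i, j, k with j ≠ k. Then ⟨x_j, y_i⟩ = −1/3 for all distinct i, j. Moreover, if scalars λ₁,…,λ_m satisfy Σ_i λ_i x_i = 0, then all the λ_i are equal; and if in addition m ≠ 4, then λ_i = 0 for all i, i.e., x₁,…,x_m are linearly independent. -/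
theorem dual_vectors_rigidity
    (d m : ℕ) (hm : 3 ≤ m)
    (x y : Fin m → (Fin d → ℝ))
    (h1 : ∀ i, ∑ k, x i k * y i k = 1)
    (h2 : ∀ i j, i ≠ j → ∑ k, x j k * y i k ≤ -(1 / 3))
    (h3 : ∀ i j k : Fin m, j ≠ k → -(2 / 3) ≤ ∑ l, (x j l + x k l) * y i l) :
    (∀ i j, i ≠ j → ∑ k, x j k * y i k = -(1 / 3)) ∧
    (∀ lam : Fin m → ℝ, ∑ i, lam i • x i = 0 → ∀ i j, lam i = lam j) ∧
    (m ≠ 4 → LinearIndependent ℝ x) := by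
  have A : ∀ i j, i ≠ j → ∑ k, x j k * y i k = -(1 / 3) := by
    intro i j hij
    obtain ⟨k, hk⟩ : ∃ k, k ∉ ({i, j} : Finset (Fin m)) := by
      by_contra! h
      have h5 : (Finset.univ : Finset (Fin m)) ⊆ {i, j} := fun k _ => h k
      have h6 := Finset.card_le_card h5
      have h7 := Finset.card_le_two (a := i) (b := j)
      simp only [Finset.card_univ, Fintype.card_fin] at h6
      omega
    simp only [Finset.mem_insert, Finset.mem_singleton, not_or] at hk
    have e := h3 i j k (Ne.symm hk.2)
    simp only [add_mul, Finset.sum_add_distrib] at e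
    have e1 := h2 i j hij
    have e2 := h2 i k (Ne.symm hk.1)
    linarith
  have B : ∀ lam : Fin m → ℝ, ∑ i, lam i • x i = 0 → ∀ i, lam i = (∑ j, lam j) / 4 := by
    intro lam h i
    have e0 : ∑ j, lam j * ∑ k, x j k * y i k = 0 := by
      have : ∑ k, (∑ j, lam j • x j) k * y i k = 0 := by rw [h]; simp
      rw [← this]
      simp only [Finset.sum_apply, Pi.smul_apply, smul_eq_mul, Finset.sum_mul, Finset.mul_sum]
      rw [Finset.sum_comm]
      simp only [mul_assoc]
    have e1 : ∀ j, lam j * ∑ k, x j k * y i k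
        = -(1/3) * lam j + if i = j then (4/3) * lam j else 0 := by
      intro j
      by_cases hij : i = j
      · subst hij
        rw [h1, if_pos rfl]; ring
      · rw [A i j hij, if_neg hij]; ring
    simp only [e1, Finset.sum_add_distrib, ← Finset.mul_sum, Finset.sum_ite_eq,
      Finset.mem_univ, if_true] at e0
    linarith
  refine ⟨A, fun lam h i j => by rw [B lam h i, B lam h j], fun h4 => ?_⟩
  rw [Fintype.linearIndependent_iff]
  intro lam h i
  have b := B lam h
  have s : ∑ j, lam j = m * ((∑ j, lam j) / 4) := by
    conv_lhs => rw [Finset.sum_congr rfl (fun j _ => b j)]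
    simp
  have h4' : (m : ℝ) - 4 ≠ 0 := by
    intro h
    exact h4 (by exact_mod_cast sub_eq_zero.mp h)
  have : ((m : ℝ) - 4) * ∑ j, lam j = 0 := by linarith
  rw [b i, (mul_eq_zero.mp this).resolve_left h4']
  simp
end

section
/- Let X be a 3-dimensional real normed space and let x₁, x₂, x₃, x₄ be four distinct unit vectors in X with ‖x_i + x_j‖ ≤ 2/3 for all i ≠ j. Then ‖x_i + x_j‖ = 2/3 for all i ≠ j, x₁ + x₂ + x₃ + x₄ = 0, and the three vectors z_i = (3/2)(x_i + x₄), i = 1, 2, 3, are linearly independent unit vectors. -/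
theorem aux_entry (a l : ℝ) (h1 : a ≤ -(1/3)) (h2 : -1 ≤ a) :
    (0 ≤ l → -l ≤ l * a ∧ l * a ≤ -l/3) ∧ (l < 0 → -l/3 ≤ l * a ∧ l * a ≤ -l) := by
  refine ⟨fun h => ⟨by nlinarith, by nlinarith⟩, fun h => ⟨by nlinarith, by nlinarith⟩⟩

set_option maxHeartbeats 4000000 in
theorem aux_key (X : Type*) [NormedAddCommGroup X] [NormedSpace ℝ X]
    (x : Fin 4 → X)
    (hunit : ∀ i, ‖x i‖ = 1)
    (hsum : ∀ i j, i ≠ j → ‖x i + x j‖ ≤ 2 / 3) (l : Fin 4 → ℝ)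
    (hl : l 0 • x 0 + l 1 • x 1 + l 2 • x 2 + l 3 • x 3 = 0) :
    l 0 = l 3 ∧ l 1 = l 3 ∧ l 2 = l 3 := by
  have hf : ∀ i, ∃ f : X →L[ℝ] ℝ, ‖f‖ = 1 ∧ f (x i) = 1 := by
    intro i
    have hne : ‖x i‖ ≠ 0 := by rw [hunit i]; exact one_ne_zero
    obtain ⟨f, h1, h2⟩ := exists_dual_vector ℝ (x i) hne
    refine ⟨f, h1, ?_⟩
    rw [h2, hunit i]; simp
  choose f hf1 hf2 using hf
  have hb : ∀ i y, |f i y| ≤ ‖y‖ := by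
    intro i y
    have := (f i).le_opNorm y
    rwa [hf1, one_mul, Real.norm_eq_abs] at this
  have hE : ∀ i j, i ≠ j → (0 ≤ l j → -l j ≤ l j * f i (x j) ∧ l j * f i (x j) ≤ -l j/3) ∧
      (l j < 0 → -l j/3 ≤ l j * f i (x j) ∧ l j * f i (x j) ≤ -l j) := by
    intro i j hij
    apply aux_entry
    · have h1 := (abs_le.1 (hb i (x i + x j))).2
      have h2 := hsum i j hij
      rw [map_add, hf2] at h1
      linarith
    · have h1 := (abs_le.1 (hb i (x j))).1
      rw [hunit] at h1
      exact h1
  have hR : ∀ i, l 0 * f i (x 0) + l 1 * f i (x 1) + l 2 * f i (x 2) + l 3 * f i (x 3) = 0 := by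
    intro i
    have := congrArg (f i) hl
    simpa using this
  have r0 := hR 0
  have r1 := hR 1
  have r2 := hR 2
  have r3 := hR 3
  rw [hf2] at r0 r1 r2 r3
  have e01 := hE 0 1 (by decide)
  have e02 := hE 0 2 (by decide)
  have e03 := hE 0 3 (by decide)
  have e10 := hE 1 0 (by decide)
  have e12 := hE 1 2 (by decide)
  have e13 := hE 1 3 (by decide)
  have e20 := hE 2 0 (by decide)
  have e21 := hE 2 1 (by decide)
  have e23 := hE 2 3 (by decide)
  have e30 := hE 3 0 (by decide)
  have e31 := hE 3 1 (by decide)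
  have e32 := hE 3 2 (by decide)
  clear hR hE hb hl hsum hunit hf1 hf2
  rcases le_or_gt 0 (l 0) with s0 | s0 <;> rcases le_or_gt 0 (l 1) with s1 | s1 <;>
  rcases le_or_gt 0 (l 2) with s2 | s2 <;> rcases le_or_gt 0 (l 3) with s3 | s3 <;>
  simp only [s0, s1, s2, s3, not_lt_of_ge, not_le_of_gt, forall_true_left, false_imp_iff,
    and_true, true_and] at e01 e02 e03 e10 e12 e13 e20 e21 e23 e30 e31 e32 <;>
  refine ⟨?_, ?_, ?_⟩ <;> linarith

theorem four_two_thirds_additive_structure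
    (X : Type*) [NormedAddCommGroup X] [NormedSpace ℝ X]
    (hdim : Module.finrank ℝ X = 3)
    (x : Fin 4 → X) (hx : Function.Injective x)
    (hunit : ∀ i, ‖x i‖ = 1)
    (hsum : ∀ i j, i ≠ j → ‖x i + x j‖ ≤ 2 / 3) :
    (∀ i j, i ≠ j → ‖x i + x j‖ = 2 / 3) ∧
    (x 0 + x 1 + x 2 + x 3 = 0) ∧
    (∀ z : Fin 3 → X,
      (∀ i : Fin 3, z i = (3 / 2 : ℝ) • (x i.castSucc + x 3)) →
      (∀ i, ‖z i‖ = 1) ∧ LinearIndependent ℝ z) := by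
  have key := aux_key X x hunit hsum
  have hS : x 0 + x 1 + x 2 + x 3 = 0 := by
    have : FiniteDimensional ℝ X := Module.finite_of_finrank_eq_succ hdim
    have hnl : ¬ LinearIndependent ℝ x := by
      intro h
      have := h.fintype_card_le_finrank
      simp [hdim] at this
    rw [Fintype.not_linearIndependent_iff] at hnl
    obtain ⟨l, h1, i, hi⟩ := hnl
    rw [Fin.sum_univ_four] at h1
    obtain ⟨h0, h1', h2⟩ := key l h1
    have h3 : l 3 ≠ 0 := by
      intro h
      rw [h] at h0 h1' h2
      apply hi
      fin_cases i <;> assumption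
    rw [h0, h1', h2, ← smul_add, ← smul_add, ← smul_add] at h1
    exact (smul_eq_zero.1 h1).resolve_left h3
  have hN : ∀ i j, i ≠ j → ‖x i + x j‖ = 2 / 3 := by
    have gen : ∀ i j k m : Fin 4, i ≠ j → i ≠ k → i ≠ m → x i + x j + x k + x m = 0 →
        ‖x i + x j‖ = 2 / 3 := by
      intro i j k m hj hk hm h
      apply le_antisymm (hsum i j hj)
      have e : (2:ℝ) • x i = (x i + x j) + (x i + x k) + (x i + x m) := by
        have : (x i + x j) + (x i + x k) + (x i + x m) = (2:ℝ) • x i + (x i + x j + x k + x m) := by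
          module
        rw [this, h, add_zero]
      have n1 := norm_add₃_le (a := x i + x j) (b := x i + x k) (c := x i + x m)
      rw [← e, norm_smul, hunit] at n1
      norm_num at n1
      have := hsum i k hk
      have := hsum i m hm
      linarith
    have p01 := gen 0 1 2 3 (by decide) (by decide) (by decide) hS
    have p02 := gen 0 2 1 3 (by decide) (by decide) (by decide) (by rw [← hS]; abel)
    have p03 := gen 0 3 1 2 (by decide) (by decide) (by decide) (by rw [← hS]; abel)
    have p12 := gen 1 2 0 3 (by decide) (by decide) (by decide) (by rw [← hS]; abel)
    have p13 := gen 1 3 0 2 (by decide) (by decide) (by decide) (by rw [← hS]; abel)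
    have p23 := gen 2 3 0 1 (by decide) (by decide) (by decide) (by rw [← hS]; abel)
    intro i j hij
    fin_cases i <;> fin_cases j <;> first
      | exact absurd rfl hij
      | assumption
      | (rw [add_comm]; assumption)
  refine ⟨hN, hS, fun z hz => ⟨fun i => ?_, ?_⟩⟩
  · rw [hz, norm_smul, hN _ _ (by fin_cases i <;> decide)]
    norm_num
  · rw [Fintype.linearIndependent_iff]
    intro g hg
    rw [Fin.sum_univ_three, hz, hz, hz] at hg
    have hg' : g 0 • x 0 + g 1 • x 1 + g 2 • x 2 + (g 0 + g 1 + g 2) • x 3 = 0 := by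
      have e : g 0 • x 0 + g 1 • x 1 + g 2 • x 2 + (g 0 + g 1 + g 2) • x 3 = (2/3 : ℝ) •
        (g 0 • (3 / 2 : ℝ) • (x 0 + x 3) + g 1 • (3 / 2 : ℝ) • (x 1 + x 3) +
          g 2 • (3 / 2 : ℝ) • (x 2 + x 3)) := by module
      rw [e]
      exact (congrArg _ hg).trans (smul_zero _)
    obtain ⟨a, b, c⟩ := key ![g 0, g 1, g 2, g 0 + g 1 + g 2] (by simpa using hg')
    simp at a b c
    intro i
    fin_cases i <;> simp <;> linarith
end

section
/- Let V be a real inner product space and let v₁,…,v_m ∈ V be distinct vectors satisfying ‖v_i‖ ≥ 1 for all i and ‖v_i + v_j‖² ≤ 4/3 for all i ≠ j. Then ⟨v_i, v_j⟩ ≤ −1/3 for all i ≠ j, and consequently m ≤ 4. -/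
open scoped RealInnerProductSpace

theorem inner_product_space_bound
    (V : Type*) [NormedAddCommGroup V] [InnerProductSpace ℝ V]
    (m : ℕ) (v : Fin m → V) (hv : Function.Injective v)
    (hnorm : ∀ i, 1 ≤ ‖v i‖)
    (hsum : ∀ i j, i ≠ j → ‖v i + v j‖ ^ 2 ≤ 4 / 3) :
    (∀ i j, i ≠ j → ⟪v i, v j⟫ ≤ -(1 / 3)) ∧ m ≤ 4 := by
  constructor
  · intro i j hij
    have h := hsum i j hij
    rw [norm_add_sq_real] at h
    nlinarith [hnorm i, hnorm j]
  · by_contra! hm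
    let w : Fin 5 → V := fun i => v (Fin.castLE hm i)
    have hw : ∀ i, 1 ≤ ‖w i‖ ^ 2 := fun i => by
      have : 1 ≤ ‖w i‖ := hnorm _
      nlinarith
    have hs : ∀ i j, i ≠ j → ‖w i‖ ^ 2 + 2 * ⟪w i, w j⟫ + ‖w j‖ ^ 2 ≤ 4 / 3 := fun i j hij => by
      rw [← norm_add_sq_real]
      exact hsum _ _ (fun h => hij (Fin.castLE_injective hm h))
    have h0 := sq_nonneg ‖w 0 + w 1 + w 2 + w 3 + w 4‖
    simp only [norm_add_sq_real, inner_add_left] at h0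
    linarith [hw 0, hw 1, hw 2, hw 3, hw 4,
      hs 0 1 (by decide), hs 0 2 (by decide), hs 0 3 (by decide), hs 0 4 (by decide),
      hs 1 2 (by decide), hs 1 3 (by decide), hs 1 4 (by decide),
      hs 2 3 (by decide), hs 2 4 (by decide), hs 3 4 (by decide)]
end
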